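/- Let n ≥ 1 and let K be a smooth, strictly convex body in ℝ^{n+1} with positive support function. If h(x)·det(A(x) + x⊗x) = 1 for every x ∈ S^n (equivalently, the Gauss curvature satisfies 𝒦 = h), then K is the closed unit ball; equivalently h_K(z) = ‖z‖ for all z ∈ ℝ^{n+1}. -/

import Mathlib

open MeasureTheory Metric Real
open scoped InnerProductSpace ENNReal Topology

noncomputable section

/-- Euclidean space `ℝ^{n+1}`. -/
abbrev Eu (n : ℕ) : Type := EuclideanSpace ℝ (Fin (n + 1))

/-- The unit sphere `S^n ⊆ ℝ^{n+1}` as a subtype. -/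
abbrev Sph (n : ℕ) : Type := Metric.sphere (0 : Eu n) 1

/-- The spherical Lebesgue (surface) measure on `S^n`. -/
def sphMeas (n : ℕ) : Measure (Sph n) := (volume : Measure (Eu n)).toSphere

/-- The support function of a set `K ⊆ ℝ^{n+1}`. -/
def sfn {n : ℕ} (K : Set (Eu n)) (z : Eu n) : ℝ :=
  sSup ((fun y => ⟪z, y⟫_ℝ) '' K)

/-- The Hessian endomorphism `A(x) = D(∇ h_K)(x)`. -/
def hessA {n : ℕ} (K : Set (Eu n)) (x : Eu n) : Eu n →L[ℝ] Eu n :=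
  fderiv ℝ (gradient (sfn K)) x

/-- The rank-one endomorphism `x ⊗ x : v ↦ ⟨v, x⟩ x`. -/
def tens {n : ℕ} (x : Eu n) : Eu n →L[ℝ] Eu n :=
  (innerSL ℝ x).smulRight x

/-- `det (A(x) + x ⊗ x)`, the reciprocal Gauss curvature `1/𝒦` at `x ∈ S^n`. -/
def rK {n : ℕ} (K : Set (Eu n)) (x : Eu n) : ℝ :=
  LinearMap.det ((hessA K x + tens x : Eu n →L[ℝ] Eu n) : Eu n →ₗ[ℝ] Eu n)

/-- `K` is a smooth, strictly convex body with positive support function. -/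
structure IsSmoothConvexBody {n : ℕ} (K : Set (Eu n)) : Prop where
  compact : IsCompact K
  convex : Convex ℝ K
  interior_nonempty : (interior K).Nonempty
  pos : ∀ x : Sph n, 0 < sfn K x
  smooth : ContDiffOn ℝ (⊤ : ℕ∞) (sfn K) {(0 : Eu n)}ᶜ
  posdef : ∀ x : Sph n, ∀ v : Eu n, v ≠ 0 →
    0 < ⟪(hessA K (x : Eu n) + tens (x : Eu n)) v, v⟫_ℝ

/-- The density `h·det(A + x⊗x)` of the measure `dV` with respect to `dθ`. -/
def dens {n : ℕ} (K : Set (Eu n)) (x : Eu n) : ℝ := sfn K x * rK K x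

/-- The centroid-type point `c(K) = (∫ ∇h_K dV)/(∫ dV)`. -/
def cK {n : ℕ} (K : Set (Eu n)) : Eu n :=
  (∫ x : Sph n, dens K x ∂sphMeas n)⁻¹ •
    ∫ x : Sph n, dens K x • gradient (sfn K) x ∂sphMeas n

/-- The support function of the translated body `K - c(K)`. -/
def tsfn {n : ℕ} (K : Set (Eu n)) (x : Eu n) : ℝ := sfn K x - ⟪x, cK K⟫_ℝ


open scoped Pointwise in
theorem bm_compact (A B M : Set ℝ) (hA : IsCompact A) (hB : IsCompact B)
    (hAn : A.Nonempty) (hBn : B.Nonempty)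
    (h : ∀ a ∈ A, ∀ b ∈ B, (a + b) / 2 ∈ M) : volume A + volume B ≤ 2 * volume M := by
  obtain ⟨a, ha, hamax⟩ := hA.exists_isGreatest hAn
  obtain ⟨b, hb, hbmin⟩ := hB.exists_isLeast hBn
  set M1 : Set ℝ := (fun x => (x + b)/2) '' A
  set M2 : Set ℝ := (fun x => (a + x)/2) '' B
  have h1 : 2 * volume M1 = volume A := by
    have : M1 = (fun x => x + b/2) '' ((1/2:ℝ) • A) := by
      rw [← Set.image_smul, Set.image_image]; apply Set.image_congr; intro x _; simp; ring
    rw [this, Set.image_add_right, measure_preimage_add_right, Measure.addHaar_smul]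
    simp [← mul_assoc]
    rw [ENNReal.mul_inv_cancel (by simp) (by simp), one_mul]
  have h2 : 2 * volume M2 = volume B := by
    have : M2 = (fun x => a/2 + x) '' ((1/2:ℝ) • B) := by
      rw [← Set.image_smul, Set.image_image]; apply Set.image_congr; intro x _; simp; ring
    rw [this, Set.image_add_left, measure_preimage_add, Measure.addHaar_smul]
    simp [← mul_assoc]
    rw [ENNReal.mul_inv_cancel (by simp) (by simp), one_mul]
  have hM2 : MeasurableSet M2 := (hB.image (by fun_prop)).measurableSet
  have hd : volume (M1 ∩ M2) = 0 := by
    apply measure_mono_null (t := {(a+b)/2}) _ (by simp)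
    rintro _ ⟨⟨x, hx, rfl⟩, ⟨y, hy, hxy⟩⟩
    have := hamax hx
    have := hbmin hy
    simp only at hxy
    simp only [Set.mem_singleton_iff]
    linarith
  have hun : volume (M1 ∪ M2) = volume M1 + volume M2 := by
    have := measure_union_add_inter M1 hM2 (μ := volume)
    rw [hd, add_zero] at this; exact this
  rw [← h1, ← h2, ← mul_add, ← hun]
  gcongr
  rintro _ (⟨x, hx, rfl⟩ | ⟨x, hx, rfl⟩)
  · exact h x hx b hb
  · exact h a ha x hx

theorem bm_one (A B M : Set ℝ) (hA : MeasurableSet A) (hB : MeasurableSet B)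
    (hAn : A.Nonempty) (hBn : B.Nonempty)
    (h : ∀ a ∈ A, ∀ b ∈ B, (a + b) / 2 ∈ M) : volume A + volume B ≤ 2 * volume M := by
  obtain ⟨a, ha⟩ := hAn
  obtain ⟨b, hb⟩ := hBn
  have key : ∀ K1 ⊆ A, IsCompact K1 → ∀ K2 ⊆ B, IsCompact K2 →
      volume K1 + volume K2 ≤ 2 * volume M := by
    intro K1 h1 hc1 K2 h2 hc2
    refine le_trans (add_le_add (measure_mono (Set.subset_insert a K1))
      (measure_mono (Set.subset_insert b K2))) ?_
    refine bm_compact _ _ M (hc1.insert a) (hc2.insert b) (by simp) (by simp) ?_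
    intro x hx y hy
    exact h x (Set.insert_subset ha h1 hx) y (Set.insert_subset hb h2 hy)
  rw [hA.measure_eq_iSup_isCompact, hB.measure_eq_iSup_isCompact]
  simp only [iSup_and']
  refine ENNReal.biSup_add_biSup_le' (p := fun K => K ⊆ A ∧ IsCompact K)
    (q := fun K => K ⊆ B ∧ IsCompact K) ⟨∅, by simp⟩ ⟨∅, by simp⟩ ?_
  intro K1 h1 K2 h2
  exact key K1 h1.1 h1.2 K2 h2.1 h2.2

def PLP (V : Type*) [AddCommGroup V] [Module ℝ V] [MeasurableSpace V] (μ : Measure V) : Prop :=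
  ∀ f g m : V → ℝ≥0∞, Measurable f → Measurable g → Measurable m →
    (∀ x y, f x * g y ≤ m ((1/2:ℝ) • (x + y)) ^ 2) →
    (∫⁻ x, f x ∂μ) * (∫⁻ x, g x ∂μ) ≤ (∫⁻ x, m x ∂μ) ^ 2

theorem PLP_prod {V W : Type*} [AddCommGroup V] [Module ℝ V] [MeasurableSpace V] {μ : Measure V}
    [AddCommGroup W] [Module ℝ W] [MeasurableSpace W] {ν : Measure W} [SFinite μ] [SFinite ν]
    (h1 : PLP V μ) (h2 : PLP W ν) : PLP (V × W) (μ.prod ν) := by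
  intro f g m hf hg hm h
  rw [lintegral_prod _ hf.aemeasurable, lintegral_prod _ hg.aemeasurable,
    lintegral_prod _ hm.aemeasurable]
  apply h1 _ _ _ hf.lintegral_prod_right' hg.lintegral_prod_right' hm.lintegral_prod_right'
  intro x y
  apply h2 _ _ _ (by fun_prop) (by fun_prop) (by fun_prop)
  intro x' y'
  exact h (x, x') (y, y')


theorem PLP_equiv {V W : Type*} [AddCommGroup V] [Module ℝ V] [MeasurableSpace V] {μ : Measure V}
    [AddCommGroup W] [Module ℝ W] [MeasurableSpace W] {ν : Measure W}
    (e' : W → V) (hmp' : MeasurePreserving e' ν μ)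
    (hlin : ∀ x y, e' ((1/2:ℝ) • (x + y)) = (1/2:ℝ) • (e' x + e' y))
    (h : PLP W ν) : PLP V μ := by
  intro f g m hf hg hm hfg
  have := h (f ∘ e') (g ∘ e') (m ∘ e') (hf.comp hmp'.measurable) (hg.comp hmp'.measurable)
    (hm.comp hmp'.measurable) (by intro x y; simp only [Function.comp]; rw [hlin]; exact hfg _ _)
  simp only [Function.comp] at this
  rwa [hmp'.lintegral_comp hf, hmp'.lintegral_comp hg, hmp'.lintegral_comp hm] at this

theorem ennreal_amgm (a b c : ℝ≥0∞) (h : a + b ≤ 2 * c) : a * b ≤ c ^ 2 := by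
  by_cases hc : c = ∞
  · simp [hc]
  have h2 : (2 * c) ≠ ∞ := ENNReal.mul_ne_top (by simp) hc
  have hab := ne_top_of_le_ne_top h2 h
  have ha : a ≠ ∞ := fun h => hab (by simp [h])
  have hb : b ≠ ∞ := fun h => hab (by simp [h])
  lift a to NNReal using ha
  lift b to NNReal using hb
  lift c to NNReal using hc
  norm_cast at *
  have h' : (a:ℝ) + b ≤ 2 * c := by exact_mod_cast h
  have : (a:ℝ) * b ≤ c ^ 2 := by
    have := a.2; have := b.2
    nlinarith [sq_nonneg ((a:ℝ) - b), NNReal.coe_nonneg a, NNReal.coe_nonneg b, NNReal.coe_nonneg c]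
  exact_mod_cast this

/-- normalized one-dimensional case -/
theorem pl_norm (f g m : ℝ → ℝ) (hf : Measurable f) (hg : Measurable g) (hm : Measurable m)
    (hf0 : ∀ x, 0 ≤ f x) (hg0 : ∀ x, 0 ≤ g x) (hm0 : ∀ x, 0 ≤ m x)
    (hf1 : ∀ x, f x ≤ 1) (hg1 : ∀ x, g x ≤ 1)
    (hfs : ∀ t < 1, ∃ x, t < f x) (hgs : ∀ t < 1, ∃ x, t < g x)
    (h : ∀ x y, f x * g y ≤ m ((x + y) / 2) ^ 2) :
    (∫⁻ x, ENNReal.ofReal (f x)) + (∫⁻ x, ENNReal.ofReal (g x)) ≤ 2 * ∫⁻ x, ENNReal.ofReal (m x) := by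
  rw [lintegral_eq_lintegral_meas_lt _ (ae_of_all _ hf0) hf.aemeasurable,
    lintegral_eq_lintegral_meas_lt _ (ae_of_all _ hg0) hg.aemeasurable,
    lintegral_eq_lintegral_meas_lt _ (ae_of_all _ hm0) hm.aemeasurable]
  have hmeas : ∀ u : ℝ → ℝ, Measurable fun t => volume {a | t < u a} := by
    intro u
    exact Antitone.measurable (fun s t hst => measure_mono (fun a ha => lt_of_le_of_lt hst ha))
  rw [← lintegral_add_left (hmeas f), ← lintegral_const_mul _ (hmeas m)]
  apply setLIntegral_mono ((hmeas m).const_mul _)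
  intro t ht
  rw [Set.mem_Ioi] at ht
  by_cases h1 : t < 1
  · apply bm_one _ _ _ (measurableSet_lt measurable_const hf) (measurableSet_lt measurable_const hg)
      (hfs t h1) (hgs t h1)
    intro a ha b hb
    simp only [Set.mem_ofPred_eq] at *
    have := h a b
    have h3 : t * t < f a * g b := mul_lt_mul'' ha hb ht.le ht.le
    nlinarith [hm0 ((a+b)/2)]
  · have e1 : {a | t < f a} = ∅ := by ext a; simp; linarith [hf1 a]
    have e2 : {a | t < g a} = ∅ := by ext a; simp; linarith [hg1 a]
    simp [e1, e2]

theorem exists_sup (f : ℝ → ℝ) (k : ℝ) (hfk : ∀ x, f x ≤ k) (x0 : ℝ) (hx0 : 0 < f x0) :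
    ∃ a > 0, (∀ x, f x ≤ a) ∧ ∀ t < 1, ∃ x, t < f x / a := by
  have hb : BddAbove (Set.range f) := ⟨k, by rintro _ ⟨x, rfl⟩; exact hfk x⟩
  refine ⟨⨆ x, f x, hx0.trans_le (le_ciSup hb x0), le_ciSup hb, ?_⟩
  intro t ht
  have hp := hx0.trans_le (le_ciSup hb x0)
  obtain ⟨x, hx⟩ := exists_lt_of_lt_ciSup (show t * (⨆ x, f x) < ⨆ x, f x by nlinarith)
  exact ⟨x, by rwa [lt_div_iff₀ hp]⟩

theorem pl_bdd (f g m : ℝ → ℝ) (hf : Measurable f) (hg : Measurable g) (hm : Measurable m)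
    (hf0 : ∀ x, 0 ≤ f x) (hg0 : ∀ x, 0 ≤ g x) (hm0 : ∀ x, 0 ≤ m x) (k : ℝ)
    (hf1 : ∀ x, f x ≤ k) (hg1 : ∀ x, g x ≤ k)
    (h : ∀ x y, f x * g y ≤ m ((x + y) / 2) ^ 2) :
    (∫⁻ x, ENNReal.ofReal (f x)) * (∫⁻ x, ENNReal.ofReal (g x)) ≤ (∫⁻ x, ENNReal.ofReal (m x)) ^ 2 := by
  by_cases hfz : ∀ x, f x = 0
  · simp [hfz]
  by_cases hgz : ∀ x, g x = 0
  · simp [hgz]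
  push Not at hfz hgz
  obtain ⟨x0, hx0⟩ := hfz
  obtain ⟨y0, hy0⟩ := hgz
  obtain ⟨a, ha, hfa, hfs⟩ := exists_sup f k hf1 x0 (lt_of_le_of_ne (hf0 _) hx0.symm)
  obtain ⟨b, hb, hgb, hgs⟩ := exists_sup g k hg1 y0 (lt_of_le_of_ne (hg0 _) hy0.symm)
  have hab : 0 < √(a * b) := by positivity
  have key := ennreal_amgm _ _ _ (pl_norm (fun x => f x / a) (fun x => g x / b) (fun x => m x / √(a * b))
    (by fun_prop) (by fun_prop) (by fun_prop) (fun x => div_nonneg (hf0 x) ha.le)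
    (fun x => div_nonneg (hg0 x) hb.le) (fun x => div_nonneg (hm0 x) hab.le)
    (fun x => (div_le_one ha).2 (hfa x)) (fun x => (div_le_one hb).2 (hgb x)) hfs hgs (by
      intro x y
      rw [div_pow, Real.sq_sqrt (by positivity), div_mul_div_comm]
      gcongr
      exact h x y))
  have e : ∀ (u : ℝ → ℝ) (c : ℝ), Measurable u → 0 < c → ∫⁻ x, ENNReal.ofReal (u x) =
      ENNReal.ofReal c * ∫⁻ x, ENNReal.ofReal (u x / c) := by
    intro u c hu hc
    rw [← lintegral_const_mul _ (by fun_prop)]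
    congr 1; ext x
    rw [← ENNReal.ofReal_mul hc.le]; congr 1; field_simp
  rw [e f a hf ha, e g b hg hb, e m _ hm hab]
  calc _ = (ENNReal.ofReal a * ENNReal.ofReal b) * ((∫⁻ x, ENNReal.ofReal (f x / a)) * ∫⁻ x, ENNReal.ofReal (g x / b)) := by ring
    _ ≤ (ENNReal.ofReal a * ENNReal.ofReal b) * (∫⁻ x, ENNReal.ofReal (m x / √(a*b))) ^ 2 := by gcongr
    _ = _ := by
      rw [mul_pow, ← ENNReal.ofReal_mul ha.le, ← ENNReal.ofReal_pow hab.le, Real.sq_sqrt (by positivity)]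

theorem PLP_real : PLP ℝ volume := by
  intro f g m hf hg hm h
  have key : ∀ k : ℕ, (∫⁻ x, min (f x) k) * (∫⁻ x, min (g x) k) ≤ (∫⁻ x, m x) ^ 2 := by
    intro k
    have hk : (k : ℝ≥0∞) ≠ ∞ := by simp
    have fin : ∀ u : ℝ → ℝ≥0∞, ∀ x, min (u x) k ≠ ∞ := fun u x =>
      ne_top_of_le_ne_top hk (min_le_right _ _)
    have hle : ∀ u : ℝ → ℝ≥0∞, ∀ x, (min (u x) k).toReal ≤ k := fun u x => by
      have := ENNReal.toReal_mono hk (min_le_right (u x) k)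
      simpa using this
    have := pl_bdd (fun x => (min (f x) k).toReal) (fun x => (min (g x) k).toReal)
      (fun x => (min (m x) k).toReal) (by fun_prop) (by fun_prop) (by fun_prop)
      (by simp) (by simp) (by simp) k (hle f) (hle g) (by
        intro x y
        rw [← ENNReal.toReal_mul, ← ENNReal.toReal_pow]
        apply ENNReal.toReal_mono (ENNReal.pow_ne_top (fin _ _))
        have h1 := h x y
        rw [show (1/2:ℝ) • (x + y) = (x + y)/2 by simp; ring] at h1
        rcases le_total (m ((x+y)/2)) k with h2 | h2
        · rw [min_eq_left h2]
          refine le_trans ?_ h1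
          gcongr <;> exact min_le_left _ _
        · rw [min_eq_right h2, sq]
          gcongr <;> exact min_le_right _ _)
    simp only [ENNReal.ofReal_toReal (fin _ _)] at this
    refine this.trans ?_
    gcongr
    exact min_le_left _ _
  have lim : ∀ u : ℝ → ℝ≥0∞, Measurable u →
      Filter.Tendsto (fun k : ℕ => ∫⁻ x, min (u x) k) Filter.atTop (𝓝 (∫⁻ x, u x)) := by
    intro u hu
    apply lintegral_tendsto_of_tendsto_of_monotone
    · intro n; fun_prop
    · refine ae_of_all _ fun x i j hij => ?_
      simp only
      gcongr
    · refine ae_of_all _ fun x => ?_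
      have : Filter.Tendsto (fun k : ℕ => min (u x) (k:ℝ≥0∞)) Filter.atTop (𝓝 (min (u x) ∞)) :=
        tendsto_const_nhds.min ENNReal.tendsto_nat_nhds_top
      simpa using this
  by_cases hf0 : ∫⁻ x, f x = 0
  · simp [hf0]
  by_cases hg0 : ∫⁻ x, g x = 0
  · simp [hg0]
  exact le_of_tendsto (ENNReal.Tendsto.mul (lim f hf) (Or.inl hf0) (lim g hg) (Or.inl hg0))
    (Filter.Eventually.of_forall key)

theorem PLP_pi (N : ℕ) : PLP (Fin N → ℝ) volume := by
  induction N with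
  | zero =>
    intro f g m hf hg hm h
    simp only [lintegral_unique, volume_pi]
    simp
    refine le_trans (h _ _) (le_of_eq ?_)
    congr 2
    exact Subsingleton.elim _ _
  | succ N ih =>
    have e := volume_preserving_piFinSuccAbove (fun _ : Fin (N+1) => ℝ) 0
    refine PLP_equiv _ e.symm ?_ (PLP_prod PLP_real ih)
    rintro ⟨x, x'⟩ ⟨y, y'⟩
    ext i
    refine Fin.cases ?_ (fun j => ?_) i <;> simp [MeasurableEquiv.piFinSuccAbove] <;> ring

theorem PLP_eu (N : ℕ) : PLP (EuclideanSpace ℝ (Fin N)) volume := by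
  refine PLP_equiv _ (PiLp.volume_preserving_toLp (Fin N)) ?_ (PLP_pi N)
  intro x y
  simp

theorem bm_eu (N : ℕ) (A B M : Set (EuclideanSpace ℝ (Fin N))) (hA : MeasurableSet A)
    (hB : MeasurableSet B) (h : ∀ a ∈ A, ∀ b ∈ B, (1/2:ℝ) • (a + b) ∈ M) :
    volume A * volume B ≤ volume M ^ 2 := by
  have hM := measurableSet_toMeasurable volume M
  have := PLP_eu N (A.indicator 1) (B.indicator 1) ((toMeasurable volume M).indicator 1)
    (measurable_one.indicator hA) (measurable_one.indicator hB) (measurable_one.indicator hM) (by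
      intro x y
      by_cases hx : x ∈ A
      · by_cases hy : y ∈ B
        · have := subset_toMeasurable volume M (h x hx y hy)
          rw [Set.indicator_of_mem hx, Set.indicator_of_mem hy, Set.indicator_of_mem this]
          simp
        · simp [hy]
      · simp [hx])
  simpa [lintegral_indicator_one, hA, hB, hM] using this

instance sphMeas_fin (n : ℕ) : IsFiniteMeasure (sphMeas n) := by unfold sphMeas; infer_instance
instance sphMeas_openPos (n : ℕ) : (sphMeas n).IsOpenPosMeasure := by unfold sphMeas; infer_instance

theorem polar_vol (n : ℕ) (ρ : Sph n → ℝ) (hρ : Continuous ρ) (hpos : ∀ x, 0 < ρ x)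
    (S : Set (Eu n))
    (hS : S = {z | ∃ x : Sph n, ∃ r : ℝ, 0 < r ∧ r < ρ x ∧ z = r • (x : Eu n)}) :
    volume S = ENNReal.ofReal (∫ x, ρ x ^ (n+1) / (n+1) ∂sphMeas n) := by
  have mp := (volume : Measure (Eu n)).measurePreserving_homeomorphUnitSphereProd
  set T : Set (Sph n × Set.Ioi (0:ℝ)) := {p | (p.2 : ℝ) < ρ p.1}
  have hT : MeasurableSet T := (isOpen_lt (by fun_prop) (by fun_prop)).measurableSet
  have h1 := mp.measure_preimage hT.nullMeasurableSet
  rw [comap_subtype_coe_apply (measurableSet_singleton _).compl] at h1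
  have h2 : Subtype.val '' (homeomorphUnitSphereProd (Eu n) ⁻¹' T) = S := by
    rw [hS]
    ext z
    constructor
    · rintro ⟨w, hw, rfl⟩
      refine ⟨(homeomorphUnitSphereProd (Eu n) w).1, (homeomorphUnitSphereProd (Eu n) w).2,
        (homeomorphUnitSphereProd (Eu n) w).2.2, hw, ?_⟩
      have := (homeomorphUnitSphereProd (Eu n)).symm_apply_apply w
      have hw0 : (w : Eu n) ≠ 0 := w.2
      simp [smul_smul, hw0]
    · rintro ⟨x, r, hr, hrx, rfl⟩
      refine ⟨(homeomorphUnitSphereProd (Eu n)).symm (x, ⟨r, hr⟩), ?_, ?_⟩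
      · change homeomorphUnitSphereProd (Eu n) _ ∈ T
        rw [Homeomorph.apply_symm_apply]
        exact hrx
      · simp
  rw [h2] at h1
  rw [h1, Measure.prod_apply hT, ofReal_integral_eq_lintegral_ofReal]
  · rw [sphMeas]
    apply lintegral_congr
    intro x
    have : Prod.mk x ⁻¹' T = Set.Iio ⟨ρ x, hpos x⟩ := by ext r; simp [T, ← Subtype.coe_lt_coe]
    rw [this, Measure.volumeIoiPow_apply_Iio]
    simp
  · exact Continuous.integrable_of_hasCompactSupport (by fun_prop) (HasCompactSupport.of_compactSpace _)
  · exact ae_of_all _ fun x => by have := (hpos x).le; positivity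

theorem polar_int (n : ℕ) (β : ℝ → ℝ) (g : Eu n → ℝ)
    (hg : ∀ r : ℝ, 0 < r → ∀ z, g (r • z) = g z) :
    ∫ z, β ‖z‖ * g z = (∫ r : Set.Ioi (0:ℝ), β r ∂(Measure.volumeIoiPow n)) * ∫ x : Sph n, g x ∂sphMeas n := by
  have mp := (volume : Measure (Eu n)).measurePreserving_homeomorphUnitSphereProd
  have h1 : ∫ z : Eu n, β ‖z‖ * g z = ∫ x : ({(0)}ᶜ : Set (Eu n)), β ‖x.1‖ * g x.1 ∂(volume.comap Subtype.val) := by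
    rw [integral_subtype_comap (measurableSet_singleton _).compl fun x : Eu n ↦ β ‖x‖ * g x,
      restrict_compl_singleton]
  have h2 := mp.integral_comp (Homeomorph.measurableEmbedding _) (fun p => g (p.1 : Eu n) * β p.2)
  rw [h1, mul_comm]
  have hd : Module.finrank ℝ (Eu n) - 1 = n := by simp
  rw [hd] at h2
  have h3 := integral_prod_mul (μ := sphMeas n) (ν := Measure.volumeIoiPow n) (fun x => g (x : Eu n)) (fun r => β (r : ℝ))
  rw [← h3]
  refine Eq.trans ?_ h2
  congr 1
  ext w
  have : (w : Eu n) ≠ 0 := w.2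
  simp only [homeomorphUnitSphereProd_apply_snd_coe, homeomorphUnitSphereProd_apply_fst_coe]
  rw [hg _ (by positivity), mul_comm]

theorem fderiv_hom {n : ℕ} (u : Eu n → ℝ) (hd : ∀ z, z ≠ 0 → DifferentiableAt ℝ u z)
    (hom : ∀ r : ℝ, 0 < r → ∀ z, u (r • z) = r * u z) (r : ℝ) (hr : 0 < r) (z : Eu n) :
    fderiv ℝ u (r • z) = fderiv ℝ u z := by
  by_cases hz : z = 0
  · simp [hz]
  have h1 : HasFDerivAt (fun w => u (r • w)) ((fderiv ℝ u (r • z)).comp (r • ContinuousLinearMap.id ℝ (Eu n))) z :=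
    (hd (r • z) (by simp [hz, hr.ne'])).hasFDerivAt.comp z ((hasFDerivAt_id z).const_smul r)
  have h2 : HasFDerivAt (fun w => u (r • w)) (r • fderiv ℝ u z) z := by
    simp only [hom r hr]
    exact (hd z hz).hasFDerivAt.const_mul r
  have h3 := h1.unique h2
  ext v
  have h4 := congrArg (fun L => L v) h3
  simp at h4
  rcases h4 with h4 | h4
  · exact h4
  · exact absurd h4 hr.ne'

theorem euler_hom {n : ℕ} (u : Eu n → ℝ) (hd : ∀ z, z ≠ 0 → DifferentiableAt ℝ u z)
    (hom : ∀ r : ℝ, 0 < r → ∀ z, u (r • z) = r * u z) (z : Eu n) (hz : z ≠ 0) :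
    fderiv ℝ u z z = u z := by
  have h1 : HasDerivAt (fun s : ℝ => u (s • z)) (fderiv ℝ u z z) 1 := by
    have h0 : HasDerivAt (fun s : ℝ => s • z) z 1 := by
      simpa using (hasDerivAt_id (1:ℝ)).smul_const z
    have h5 : HasFDerivAt u (fderiv ℝ u z) ((1:ℝ) • z) := by
      rw [one_smul]; exact (hd z hz).hasFDerivAt
    exact h5.comp_hasDerivAt (1:ℝ) h0
  have h2 : HasDerivAt (fun s : ℝ => u (s • z)) (u z) 1 := by
    have h3 : HasDerivAt (fun s : ℝ => s * u z) (u z) 1 := by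
      simpa using (hasDerivAt_id (1:ℝ)).mul_const (u z)
    apply h3.congr_of_eventuallyEq
    filter_upwards [lt_mem_nhds (show (0:ℝ) < 1 by norm_num)] with s hs
    exact hom s hs z
  exact h1.unique h2

theorem div_zero' {n : ℕ} (w : Eu n → ℝ) (hw : ContDiff ℝ 1 w) (hc : HasCompactSupport w) (v : Eu n) :
    ∫ z, fderiv ℝ w z v = 0 := by
  have hcont : Continuous fun z => fderiv ℝ w z v := (hw.continuous_fderiv (by simp)).clm_apply continuous_const
  have := integral_mul_fderiv_eq_neg_fderiv_mul_of_integrable (μ := (volume : Measure (Eu n)))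
    (f := fun _ => (1:ℝ)) (g := w) (v := v) (by simp)
    (by simpa using hcont.integrable_of_hasCompactSupport (hc.fderiv_apply ℝ v))
    (by simpa using hw.continuous.integrable_of_hasCompactSupport hc) (by simp)
    (fun x _ => (hw.differentiable (by simp)) x)
  simpa using this

theorem div_euler {n : ℕ} (w : Eu n → ℝ) (hw : ContDiff ℝ 1 w) (hc : HasCompactSupport w) :
    ∫ z, fderiv ℝ w z z = - ((n+1 : ℝ) * ∫ z, w z) := by
  have hD := hw.continuous_fderiv (by simp)
  have hcont : ∀ v, Continuous fun z => fderiv ℝ w z v := fun v => hD.clm_apply continuous_const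
  have hIntg : ∀ i : Fin (n+1), Integrable (fun z : Eu n => z i * fderiv ℝ w z (EuclideanSpace.single i 1)) := by
    intro i
    apply Continuous.integrable_of_hasCompactSupport
    · exact (by fun_prop : Continuous fun z : Eu n => z i).mul (hcont _)
    · exact (hc.fderiv_apply ℝ _).mul_left
  have key : ∀ i : Fin (n+1), ∫ z : Eu n, z i * fderiv ℝ w z (EuclideanSpace.single i 1) = - ∫ z, w z := by
    intro i
    have hf : ∀ z : Eu n, HasFDerivAt (fun z : Eu n => z i) (EuclideanSpace.proj i : Eu n →L[ℝ] ℝ) z :=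
      fun z => (EuclideanSpace.proj i : Eu n →L[ℝ] ℝ).hasFDerivAt
    have hf' : ∀ z : Eu n, fderiv ℝ (fun z : Eu n => z i) z = (EuclideanSpace.proj i : Eu n →L[ℝ] ℝ) :=
      fun z => (hf z).fderiv
    have := integral_mul_fderiv_eq_neg_fderiv_mul_of_integrable (μ := (volume : Measure (Eu n)))
      (f := fun z => z i) (g := w) (v := EuclideanSpace.single i 1)
      (by simpa [hf'] using hw.continuous.integrable_of_hasCompactSupport hc)
      (hIntg i)
      (Continuous.integrable_of_hasCompactSupport ((by fun_prop : Continuous fun z : Eu n => z i).mul hw.continuous) hc.mul_left)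
      (fun x _ => (hf x).differentiableAt)
      (fun x _ => (hw.differentiable (by simp)) x)
    rw [this]
    simp [hf']
  have hsum : ∀ z : Eu n, fderiv ℝ w z z = ∑ i, z i * fderiv ℝ w z (EuclideanSpace.single i 1) := by
    intro z
    have : z = ∑ i, z i • EuclideanSpace.single i (1:ℝ) := by
      ext j; simp [Finset.sum_apply, Pi.single_apply]
    have h2 := congrArg (fderiv ℝ w z) this
    rw [map_sum] at h2
    simpa only [map_smul, smul_eq_mul] using h2
  simp only [hsum]
  rw [integral_finsetSum _ (fun i _ => hIntg i)]
  simp [key]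

theorem ibp (n : ℕ) (u : Eu n → ℝ) (hu : ContDiffOn ℝ 1 u {0}ᶜ)
    (hom : ∀ r : ℝ, 0 < r → ∀ z, u (r • z) = r * u z) (v : Eu n) :
    ∫ x : Sph n, fderiv ℝ u x v ∂sphMeas n = (n+1) * ∫ x : Sph n, ⟪(x : Eu n), v⟫_ℝ * u x ∂sphMeas n := by
  have hud : ∀ z, z ≠ 0 → ContDiffAt ℝ 1 u z := fun z hz =>
    hu.contDiffAt (isOpen_compl_singleton.mem_nhds hz)
  have hudd : ∀ z, z ≠ 0 → DifferentiableAt ℝ u z := fun z hz => (hud z hz).differentiableAt (by simp)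
  let b : ContDiffBump (2:ℝ) := ⟨1/2, 1, by norm_num, by norm_num⟩
  have hb0 : ∀ s : ℝ, s ≤ 1 → b s = 0 := fun s hs => b.zero_of_le_dist (by
    rw [Real.dist_eq, abs_of_nonpos (by linarith)]; change (1:ℝ) ≤ _; linarith)
  have hb3 : ∀ s : ℝ, 3 ≤ s → b s = 0 := fun s hs => b.zero_of_le_dist (by
    rw [Real.dist_eq, abs_of_nonneg (by linarith)]; change (1:ℝ) ≤ _; linarith)
  have hbs : ContDiff ℝ 1 b := b.contDiff
  have hηs : ContDiff ℝ 1 (fun z : Eu n => b (‖z‖^2)) := hbs.comp (contDiff_norm_sq ℝ)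
  have hηc : HasCompactSupport (fun z : Eu n => b (‖z‖^2)) := by
    apply HasCompactSupport.of_support_subset_isCompact (isCompact_closedBall (0 : Eu n) 2)
    intro z hz
    rw [mem_closedBall_zero_iff]
    by_contra hcon
    push Not at hcon
    exact hz (hb3 _ (by nlinarith))
  have smooth : ∀ q : Eu n → ℝ, (∀ z, z ≠ 0 → ContDiffAt ℝ 1 q z) →
      ContDiff ℝ 1 (fun z => b (‖z‖^2) * q z) := by
    intro q hq
    rw [contDiff_iff_contDiffAt]
    intro z
    by_cases hz : z = 0
    · have : (fun z : Eu n => b (‖z‖^2) * q z) =ᶠ[𝓝 z] fun _ => 0 := by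
        rw [hz]
        filter_upwards [ball_mem_nhds (0 : Eu n) one_pos] with w hw
        rw [mem_ball_zero_iff] at hw
        rw [hb0 _ (by nlinarith [norm_nonneg w]), zero_mul]
      exact contDiffAt_const.congr_of_eventuallyEq this
    · exact hηs.contDiffAt.mul (hq z hz)
  have w1 := smooth u hud
  set q : Eu n → ℝ := fun z => ⟪z, v⟫_ℝ * u z / ‖z‖^2 with hq
  have hqd : ∀ z, z ≠ 0 → ContDiffAt ℝ 1 q z := fun z hz => by
    apply ContDiffAt.div
    · exact (contDiffAt_id.inner ℝ contDiffAt_const).mul (hud z hz)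
    · exact (contDiff_norm_sq ℝ).contDiffAt
    · simpa using hz
  have hqh : ∀ r : ℝ, 0 < r → ∀ z, q (r • z) = q z := by
    intro r hr z
    simp only [hq, hom r hr, norm_smul, inner_smul_left, Real.norm_eq_abs, abs_of_pos hr]
    by_cases hz : ‖z‖ = 0
    · simp [hz]
    · simp; field_simp
  have w2 := smooth q hqd
  have i1 := div_zero' _ w1 hηc.mul_right v
  have i2 := div_euler _ w2 hηc.mul_right
  have hpt : ∀ z : Eu n, z ≠ 0 → fderiv ℝ (fun z => b (‖z‖^2) * u z) z v -
      fderiv ℝ (fun z => b (‖z‖^2) * q z) z z = b (‖z‖^2) * fderiv ℝ u z v := by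
    intro z hz
    have hz' : ‖z‖ ≠ 0 := by simpa using hz
    have hη : HasFDerivAt (fun z : Eu n => b (‖z‖^2)) (deriv b (‖z‖^2) • (2 • innerSL ℝ z)) z :=
      ((hbs.differentiable (by simp)) _).hasDerivAt.comp_hasFDerivAt z (hasStrictFDerivAt_norm_sq z).hasFDerivAt
    have f1 := (hη.mul (hudd z hz).hasFDerivAt).fderiv
    have f2 := (hη.mul ((hqd z hz).differentiableAt (by simp)).hasFDerivAt).fderiv
    change fderiv ℝ (fun z => b (‖z‖^2) * u z) z = _ at f1
    change fderiv ℝ (fun z => b (‖z‖^2) * q z) z = _ at f2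
    rw [f1, f2]
    have hq0 : fderiv ℝ q z z = 0 := by
      have h0 : HasDerivAt (fun s : ℝ => s • z) z 1 := by
        simpa using (hasDerivAt_id (1:ℝ)).smul_const z
      have h5 : HasFDerivAt q (fderiv ℝ q z) ((1:ℝ) • z) := by
        rw [one_smul]; exact ((hqd z hz).differentiableAt (by simp)).hasFDerivAt
      have h1 := h5.comp_hasDerivAt (1:ℝ) h0
      have h2 : HasDerivAt (q ∘ fun s : ℝ => s • z) 0 1 := by
        apply (hasDerivAt_const (1:ℝ) (q z)).congr_of_eventuallyEq
        filter_upwards [lt_mem_nhds (show (0:ℝ) < 1 by norm_num)] with s hs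
        exact hqh s hs z
      exact h1.unique h2
    have hqz : q z * ‖z‖^2 = ⟪z, v⟫_ℝ * u z := by
      simp only [hq]; field_simp
    simp only [add_apply, smul_apply, hq0,
      innerSL_apply_apply, real_inner_self_eq_norm_sq, smul_eq_mul, nsmul_eq_mul]
    push_cast
    linear_combination (-2 * deriv b (‖z‖^2)) * hqz
  have hc1 : Continuous fun z => fderiv ℝ (fun z => b (‖z‖^2) * u z) z v :=
    (w1.continuous_fderiv (by simp)).clm_apply continuous_const
  have hc2 : Continuous fun z => fderiv ℝ (fun z => b (‖z‖^2) * q z) z z :=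
    (w2.continuous_fderiv (by simp)).clm_apply continuous_id
  have hI1 := hc1.integrable_of_hasCompactSupport (μ := volume) ((HasCompactSupport.mul_right hηc).fderiv_apply ℝ v)
  have hI2 : Integrable (fun z => fderiv ℝ (fun z => b (‖z‖^2) * q z) z z) := by
    apply hc2.integrable_of_hasCompactSupport
    apply HasCompactSupport.mono (f := fderiv ℝ (fun z => b (‖z‖^2) * q z)) ((HasCompactSupport.mul_right hηc).fderiv ℝ)
    intro z hz h0
    apply hz
    simp only at h0 ⊢
    rw [h0]; simp
  have i3 := integral_sub hI1 hI2
  rw [i1, i2] at i3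
  have i4 : ∫ z, (fderiv ℝ (fun z => b (‖z‖^2) * u z) z v -
      fderiv ℝ (fun z => b (‖z‖^2) * q z) z z) = ∫ z, b (‖z‖^2) * fderiv ℝ u z v := by
    apply integral_congr_ae
    have : ∀ᵐ z : Eu n, z ≠ 0 := by
      rw [ae_iff]; simp
    filter_upwards [this] with z hz using hpt z hz
  rw [i4] at i3
  have p1 := polar_int n (fun r => b (r^2)) (fun z => fderiv ℝ u z v) (by
    intro r hr z; rw [fderiv_hom u hudd hom r hr])
  have p2 := polar_int n (fun r => b (r^2)) q hqh
  have p3 := polar_int n (fun r => b (r^2)) (fun _ => 1) (by simp)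
  simp only [mul_one] at p3
  have hpos : 0 < ∫ z : Eu n, b (‖z‖^2) := by
    apply Continuous.integral_pos_of_hasCompactSupport_nonneg_nonzero (x := √2 • EuclideanSpace.single 0 (1:ℝ)) hηs.continuous hηc
    · intro z; exact b.nonneg
    · have : ‖√2 • EuclideanSpace.single (0 : Fin (n+1)) (1:ℝ)‖ ^ 2 = 2 := by
        rw [norm_smul]; simp
      rw [this, b.one_of_mem_closedBall (by simp [b])]
      simp
  rw [p3] at hpos
  have hC := (left_ne_zero_of_mul hpos.ne')
  rw [p1, p2] at i3
  have e : ∀ x : Sph n, q x = ⟪(x : Eu n), v⟫_ℝ * u x := fun x => by simp [hq]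
  simp only [e] at i3
  apply mul_left_cancel₀ hC
  rw [i3]; ring

structure Dat (n : ℕ) (h : Eu n → ℝ) (X : Eu n → Eu n) (A : Eu n → Eu n →L[ℝ] Eu n) : Prop where
  hom : ∀ r : ℝ, 0 < r → ∀ z, h (r • z) = r * h z
  pos : ∀ z, z ≠ 0 → 0 < h z
  smooth : ContDiffOn ℝ 2 h {0}ᶜ
  hX : ∀ z, z ≠ 0 → HasFDerivAt h (innerSL ℝ (X z)) z
  hA : ∀ z, z ≠ 0 → HasFDerivAt X (A z) z
  cX : ContinuousOn X {0}ᶜ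
  cA : ContinuousOn A {0}ᶜ
  sup : ∀ x, x ≠ 0 → ∀ u, ⟪X x, u⟫_ℝ ≤ h u
  Xz : ∀ z, z ≠ 0 → ⟪X z, z⟫_ℝ = h z
  Xhom : ∀ r : ℝ, 0 < r → ∀ z, X (r • z) = X z
  Az : ∀ z, z ≠ 0 → A z z = 0
  sym : ∀ z, z ≠ 0 → ∀ v w, ⟪A z v, w⟫_ℝ = ⟪A z w, v⟫_ℝ
  Ahom : ∀ r : ℝ, 0 < r → ∀ z, z ≠ 0 → A (r • z) = r⁻¹ • A z
  posdef : ∀ x : Sph n, ∀ v, v ≠ 0 → 0 < ⟪(A x + tens (x : Eu n)) v, v⟫_ℝ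
  det : ∀ x : Sph n, h x * LinearMap.det ((A x + tens (x : Eu n) : Eu n →L[ℝ] Eu n) : Eu n →ₗ[ℝ] Eu n) = 1

theorem sfn_isLUB {n : ℕ} {K : Set (Eu n)} (hK : IsSmoothConvexBody K) (z : Eu n) :
    ∃ p ∈ K, ⟪z, p⟫_ℝ = sfn K z ∧ ∀ y ∈ K, ⟪z, y⟫_ℝ ≤ sfn K z := by
  have hne : K.Nonempty := hK.interior_nonempty.mono interior_subset
  obtain ⟨p, hp, hm⟩ := hK.compact.exists_isMaxOn hne
    (f := fun y => ⟪z, y⟫_ℝ) (by fun_prop)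
  have hg : IsGreatest ((fun y => ⟪z, y⟫_ℝ) '' K) ⟪z, p⟫_ℝ := by
    refine ⟨⟨p, hp, rfl⟩, ?_⟩
    rintro _ ⟨y, hy, rfl⟩
    exact hm hy
  have e : sfn K z = ⟪z, p⟫_ℝ := hg.csSup_eq
  refine ⟨p, hp, e.symm, fun y hy => ?_⟩
  rw [e]; exact hm hy

theorem sfn_hom {n : ℕ} {K : Set (Eu n)} (hK : IsSmoothConvexBody K) (r : ℝ) (hr : 0 < r)
    (z : Eu n) : sfn K (r • z) = r * sfn K z := by
  obtain ⟨p, hp, e, hm⟩ := sfn_isLUB hK z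
  obtain ⟨p', hp', e', hm'⟩ := sfn_isLUB hK (r • z)
  have h1 := hm' p hp
  have h2 := hm p' hp'
  rw [real_inner_smul_left] at e' h1
  apply le_antisymm
  · rw [← e']; gcongr
  · rw [← e]; exact h1

theorem mk_dat {n : ℕ} {K : Set (Eu n)} (hK : IsSmoothConvexBody K)
    (heq : ∀ x : Sph n, sfn K (x : Eu n) * rK K (x : Eu n) = 1) :
    Dat n (sfn K) (gradient (sfn K)) (hessA K) := by
  have hop : IsOpen ({0}ᶜ : Set (Eu n)) := isOpen_compl_singleton
  have hsm : ContDiffOn ℝ 2 (sfn K) {0}ᶜ := hK.smooth.of_le (by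
      change ((2 : ℕ∞) : WithTop ℕ∞) ≤ _
      exact WithTop.coe_le_coe.mpr le_top)
  have hom := sfn_hom hK
  have hd : ∀ z, z ≠ 0 → DifferentiableAt ℝ (sfn K) z := fun z hz =>
    (hsm.contDiffAt (hop.mem_nhds hz)).differentiableAt (by simp)
  have hin : ∀ z w, ⟪gradient (sfn K) z, w⟫_ℝ = fderiv ℝ (sfn K) z w := by
    intro z w
    simp [gradient]
  have hX : ∀ z, z ≠ 0 → HasFDerivAt (sfn K) (innerSL ℝ (gradient (sfn K) z)) z := by
    intro z hz
    have e : innerSL ℝ (gradient (sfn K) z) = fderiv ℝ (sfn K) z := by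
      ext w; simp [hin]
    rw [e]; exact (hd z hz).hasFDerivAt
  have hXs : ContDiffOn ℝ 1 (gradient (sfn K)) {0}ᶜ := by
    rw [contDiffOn_euclidean]
    intro i
    have e : (fun z => (gradient (sfn K) z) i) =
        fun z => fderiv ℝ (sfn K) z (EuclideanSpace.single i 1) := by
      funext z
      rw [← hin]
      rw [EuclideanSpace.inner_single_right]; simp only [one_mul, conj_trivial]
    rw [e]
    have := hsm.fderiv_of_isOpen (m := 1) hop (by norm_num)
    exact this.clm_apply contDiffOn_const
  have hA : ∀ z, z ≠ 0 → HasFDerivAt (gradient (sfn K)) (hessA K z) z := fun z hz =>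
    ((hXs.contDiffAt (hop.mem_nhds hz)).differentiableAt (by simp)).hasFDerivAt
  have hXhom : ∀ r : ℝ, 0 < r → ∀ z, gradient (sfn K) (r • z) = gradient (sfn K) z := by
    intro r hr z
    simp only [gradient]
    rw [fderiv_hom (sfn K) hd hom r hr z]
  refine ⟨hom, ?_, hsm, hX, hA, hXs.continuousOn, ?_, ?_, ?_, hXhom, ?_, ?_, ?_, hK.posdef, heq⟩
  · intro z hz
    have hz' : 0 < ‖z‖ := norm_pos_iff.mpr hz
    have := hK.pos ⟨‖z‖⁻¹ • z, by simp [norm_smul, hz'.ne']⟩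
    simp only at this
    rw [hom _ (by positivity)] at this
    exact (pos_iff_pos_of_mul_pos this).mp (by positivity)
  · exact (hXs.fderiv_of_isOpen (m := 0) hop (by simp)).continuousOn
  · intro x hx u
    obtain ⟨p, hp, e, hm⟩ := sfn_isLUB hK x
    have hmin : IsLocalMin (fun z => sfn K z - ⟪p, z⟫_ℝ) x := by
      apply Filter.Eventually.of_forall
      intro z
      obtain ⟨_, _, _, hm'⟩ := sfn_isLUB hK z
      have := hm' p hp
      simp only
      rw [real_inner_comm, e, real_inner_comm]; linarith
    have hder : HasFDerivAt (fun z => sfn K z - ⟪p, z⟫_ℝ)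
      (innerSL ℝ (gradient (sfn K) x) - innerSL ℝ p) x :=
      (hX x hx).sub (innerSL ℝ p).hasFDerivAt
    have h0 := hmin.hasFDerivAt_eq_zero hder
    have h1 := congrArg (fun L : Eu n →L[ℝ] ℝ => L u) h0
    simp at h1
    obtain ⟨_, _, _, hm'⟩ := sfn_isLUB hK u
    have := hm' p hp
    rw [real_inner_comm] at this
    simp at *
    linarith
  · intro z hz
    rw [hin]
    exact euler_hom _ hd hom z hz
  · intro z hz
    have h0 : HasDerivAt (fun s : ℝ => s • z) z 1 := by
      simpa using (hasDerivAt_id (1:ℝ)).smul_const z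
    have h5 : HasFDerivAt (gradient (sfn K)) (hessA K z) ((1:ℝ) • z) := by
      rw [one_smul]; exact hA z hz
    have h1 := h5.comp_hasDerivAt (1:ℝ) h0
    have h2 : HasDerivAt (gradient (sfn K) ∘ fun s : ℝ => s • z) 0 1 := by
      apply (hasDerivAt_const (1:ℝ) (gradient (sfn K) z)).congr_of_eventuallyEq
      filter_upwards [lt_mem_nhds (show (0:ℝ) < 1 by norm_num)] with s hs
      exact hXhom s hs z
    exact h1.unique h2
  · intro z hz v w
    have hs : IsSymmSndFDerivAt ℝ (sfn K) z :=
      (hsm.contDiffAt (hop.mem_nhds hz)).isSymmSndFDerivAt (by simp)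
    have hdd : DifferentiableAt ℝ (fderiv ℝ (sfn K)) z :=
      ((hsm.fderiv_of_isOpen (m := 1) hop (by norm_num)).contDiffAt (hop.mem_nhds hz)).differentiableAt (by simp)
    have key : ∀ v w, ⟪hessA K z v, w⟫_ℝ = fderiv ℝ (fderiv ℝ (sfn K)) z v w := by
      intro v w
      have a1 := (hA z hz).inner ℝ (hasFDerivAt_const w z)
      have a2 := hdd.hasFDerivAt.clm_apply (hasFDerivAt_const w z)
      have e : (fun z => ⟪gradient (sfn K) z, w⟫_ℝ) = fun z => fderiv ℝ (sfn K) z w := by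
        funext z; exact hin z w
      rw [e] at a1
      have := congrArg (fun L : Eu n →L[ℝ] ℝ => L v) (a1.unique a2)
      simpa [fderivInnerCLM_apply] using this
    rw [key, key]; exact hs v w
  · intro r hr z hz
    have hrz : r • z ≠ 0 := smul_ne_zero hr.ne' hz
    have a1 : HasFDerivAt (fun z => gradient (sfn K) (r • z)) ((hessA K (r • z)).comp (r • ContinuousLinearMap.id ℝ (Eu n))) z :=
      (hA _ hrz).comp z ((hasFDerivAt_id z).const_smul r)
    have e : (fun z => gradient (sfn K) (r • z)) = gradient (sfn K) := by
      funext z; exact hXhom r hr z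
    rw [e] at a1
    have := a1.unique (hA z hz)
    rw [← this]
    ext v
    simp [hr.ne']

/-- The radial map `z ↦ ‖z‖ ∇h(z)`. -/
def Fm {n : ℕ} (X : Eu n → Eu n) (z : Eu n) : Eu n := ‖z‖ • X z

/-- The derivative of `Fm`. -/
def DFm {n : ℕ} (X : Eu n → Eu n) (A : Eu n → Eu n →L[ℝ] Eu n) (z : Eu n) : Eu n →L[ℝ] Eu n :=
  ‖z‖ • A z + (‖z‖⁻¹ • innerSL ℝ z).smulRight (X z)

namespace Dat

variable {n : ℕ} {h : Eu n → ℝ} {X : Eu n → Eu n} {A : Eu n → Eu n →L[ℝ] Eu n}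

theorem F_deriv (D : Dat n h X A) (z : Eu n) (hz : z ≠ 0) :
    HasFDerivAt (Fm X) (DFm X A z) z := by
  have h1 : HasFDerivAt (fun z : Eu n => ‖z‖) (‖z‖⁻¹ • innerSL ℝ z) z := by
    have h0 := (hasStrictFDerivAt_norm_sq z).hasFDerivAt.sqrt (by simpa using hz)
    have e : (fun z : Eu n => √(‖z‖^2)) = fun z => ‖z‖ := by
      funext z; exact Real.sqrt_sq (norm_nonneg _)
    rw [e] at h0
    have e3 : (1 / (2 * √(‖z‖ ^ 2))) • 2 • (innerSL ℝ) z = ‖z‖⁻¹ • innerSL ℝ z := by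
      rw [Real.sqrt_sq (norm_nonneg _)]
      ext v
      simp
      ring
    rw [← e3]; exact h0
  exact h1.smul (D.hA z hz)

theorem sph_ne (x : Sph n) : (x : Eu n) ≠ 0 := by
  intro h0
  have := x.2
  rw [h0] at this
  simp at this

theorem F_det_sph (D : Dat n h X A) (x : Sph n) :
    (DFm X A x : Eu n →L[ℝ] Eu n).det = 1 := by
  have hx := sph_ne x
  have hx1 : ⟪(x : Eu n), (x : Eu n)⟫_ℝ = 1 := by simp
  have e : ((DFm X A x : Eu n →L[ℝ] Eu n) : Eu n →ₗ[ℝ] Eu n) =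
      (LinearMap.transvection ((innerSL ℝ (x : Eu n) : Eu n →L[ℝ] ℝ) : Eu n →ₗ[ℝ] ℝ) (X x - x)).comp
        ((A x + tens (x : Eu n) : Eu n →L[ℝ] Eu n) : Eu n →ₗ[ℝ] Eu n) := by
    ext1 v
    have h0 : ⟪(x : Eu n), A x v⟫_ℝ = 0 := by
      rw [real_inner_comm, D.sym x hx, D.Az x hx, inner_zero_left]
    simp [DFm, tens, LinearMap.transvection.apply, inner_add_right, h0, inner_smul_right]
    module
  rw [ContinuousLinearMap.det, e, LinearMap.det_comp, LinearMap.transvection.det]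
  have := D.det x
  have e2 : ⟪(x : Eu n), X x⟫_ℝ = h x := by rw [real_inner_comm, D.Xz x hx]
  have e4 : 1 + ⟪(x : Eu n), X x - x⟫_ℝ = h x := by
    rw [inner_sub_right, e2, hx1]; ring
  rw [← e4] at this
  exact this

theorem F_det (D : Dat n h X A) (z : Eu n) (hz : z ≠ 0) :
    (DFm X A z : Eu n →L[ℝ] Eu n).det = 1 := by
  have hz' : 0 < ‖z‖ := norm_pos_iff.mpr hz
  rw [← D.F_det_sph ⟨‖z‖⁻¹ • z, by simp [norm_smul, hz'.ne']⟩]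
  congr 1
  ext1 v
  simp only [DFm, D.Xhom _ (inv_pos.mpr hz'), D.Ahom _ (inv_pos.mpr hz') z hz, norm_smul, inv_inv]
  simp [inner_smul_left, hz'.ne']

theorem h_zero (D : Dat n h X A) : h 0 = 0 := by
  have := D.hom 2 (by norm_num) 0
  rw [smul_zero] at this
  linarith

theorem subadd (D : Dat n h X A) (a b : Eu n) : h (a + b) ≤ h a + h b := by
  have nn : ∀ z, 0 ≤ h z := fun z => by
    by_cases hz : z = 0
    · rw [hz, D.h_zero]
    · exact (D.pos z hz).le
  by_cases hab : a + b = 0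
  · rw [hab, D.h_zero]; linarith [nn a, nn b]
  · rw [← D.Xz _ hab, inner_add_right]
    exact add_le_add (D.sup _ hab a) (D.sup _ hab b)

theorem touch (D : Dat n h X A) (p z : Eu n) (hz : z ≠ 0) (hp : ∀ u, ⟪p, u⟫_ℝ ≤ h u)
    (he : ⟪p, z⟫_ℝ = h z) : X z = p := by
  have hmin : IsLocalMin (fun z => h z - ⟪p, z⟫_ℝ) z := by
    apply Filter.Eventually.of_forall
    intro u
    have := hp u
    simp only
    rw [he]; linarith
  have h0 := hmin.hasFDerivAt_eq_zero ((D.hX z hz).sub (innerSL ℝ p).hasFDerivAt)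
  apply ext_inner_right ℝ
  intro u
  have h1 := congrArg (fun L : Eu n →L[ℝ] ℝ => L u) h0
  simp at h1
  linarith

theorem ker (D : Dat n h X A) (z w : Eu n) (hz : z ≠ 0) (hw : A z w = 0) :
    ∃ c : ℝ, w = c • z := by
  have hz' : 0 < ‖z‖ := norm_pos_iff.mpr hz
  set x : Sph n := ⟨‖z‖⁻¹ • z, by simp [norm_smul, hz'.ne']⟩ with hxd
  have hxv : (x : Eu n) = ‖z‖⁻¹ • z := rfl
  have hA0 : A x w = 0 := by
    rw [hxv, D.Ahom _ (inv_pos.mpr hz') z hz]; simp [hw]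
  have hAx : A x x = 0 := D.Az x (sph_ne x)
  have hx1 : ⟪(x : Eu n), (x : Eu n)⟫_ℝ = 1 := by simp
  have : w - ⟪(x : Eu n), w⟫_ℝ • (x : Eu n) = 0 := by
    by_contra hne
    have hp := D.posdef x _ hne
    have e : (A x + tens (x : Eu n)) (w - ⟪(x : Eu n), w⟫_ℝ • (x : Eu n)) = 0 := by
      simp [hA0, hAx, tens, inner_sub_right, inner_smul_right]
    rw [e, inner_zero_left] at hp
    exact lt_irrefl _ hp
  refine ⟨⟪(x : Eu n), w⟫_ℝ * ‖z‖⁻¹, ?_⟩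
  rw [mul_smul, ← hxv]
  exact sub_eq_zero.mp this

theorem F_inj (D : Dat n h X A) : Set.InjOn (Fm X) {0}ᶜ := by
  intro z1 hz1 z2 hz2 he
  simp only [Set.mem_compl_iff, Set.mem_singleton_iff] at hz1 hz2
  have a1 : 0 < ‖z1‖ := norm_pos_iff.mpr hz1
  have a2 : 0 < ‖z2‖ := norm_pos_iff.mpr hz2
  have key : ∀ z1 z2 : Eu n, z1 ≠ 0 → z2 ≠ 0 → Fm X z1 = Fm X z2 → ‖z1‖ ≤ ‖z2‖ := by
    intro z1 z2 h1 h2 he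
    have e := congrArg (fun y => ⟪y, z1⟫_ℝ) he
    simp only [Fm, real_inner_smul_left, D.Xz z1 h1] at e
    have := D.sup z2 h2 z1
    have hp := D.pos z1 h1
    by_contra hlt
    push Not at hlt
    nlinarith [norm_nonneg z2]
  have hab : ‖z1‖ = ‖z2‖ := le_antisymm (key _ _ hz1 hz2 he) (key _ _ hz2 hz1 he.symm)
  have hXX : X z1 = X z2 := by
    simp only [Fm, hab] at he
    exact smul_right_injective _ a2.ne' he
  set w := z2 - z1 with hw
  have seg : ∀ s : ℝ, 0 ≤ s → s ≤ 1 → z1 + s • w ≠ 0 → X (z1 + s • w) = X z1 := by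
    intro s h0 h1 hne
    apply D.touch _ _ hne (D.sup z1 hz1)
    apply le_antisymm (D.sup z1 hz1 _)
    have hh : ∀ r : ℝ, 0 ≤ r → ∀ z, h (r • z) = r * h z := by
      intro r hr z
      rcases hr.eq_or_lt with h | h
      · rw [← h]; simp [D.h_zero]
      · exact D.hom r h z
    have e : z1 + s • w = (1 - s) • z1 + s • z2 := by rw [hw]; module
    rw [e]
    refine (D.subadd _ _).trans ?_
    rw [hh _ (by linarith), hh _ h0, inner_add_right, real_inner_smul_right, real_inner_smul_right,
      D.Xz z1 hz1, hXX, D.Xz z2 hz2]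
  have hAw : A z1 w = 0 := by
    have hc : HasDerivAt (fun s : ℝ => z1 + s • w) w 0 := by
      simpa using ((hasDerivAt_id (0:ℝ)).smul_const w).const_add z1
    have h5 : HasFDerivAt X (A z1) (z1 + (0:ℝ) • w) := by simpa using D.hA z1 hz1
    have d1 := (h5.comp_hasDerivAt (0:ℝ) hc).hasDerivWithinAt (s := Set.Ici 0)
    have d2 : HasDerivWithinAt (X ∘ fun s : ℝ => z1 + s • w) 0 (Set.Ici 0) 0 := by
      apply (hasDerivWithinAt_const (0:ℝ) (Set.Ici 0) (X z1)).congr_of_eventuallyEq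
      · have hne : ∀ᶠ s in 𝓝 (0:ℝ), z1 + s • w ≠ 0 :=
          hc.continuousAt.eventually_ne (by simpa using hz1)
        have hlt : ∀ᶠ s in 𝓝 (0:ℝ), s < 1 := gt_mem_nhds one_pos
        filter_upwards [nhdsWithin_le_nhds hne, nhdsWithin_le_nhds hlt, self_mem_nhdsWithin] with s s1 s2 s3
        exact seg s s3 s2.le s1
      · simp
    exact (uniqueDiffWithinAt_Ici (0:ℝ)).eq_deriv _ d1 d2
  obtain ⟨c, hc⟩ := D.ker z1 w hz1 hAw
  have hz2e : z2 = (1 + c) • z1 := by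
    rw [add_smul, ← hc, hw]; module
  have hcpos : 0 < 1 + c := by
    have := D.pos z2 hz2
    rw [← D.Xz z2 hz2, ← hXX, hz2e, real_inner_smul_right, D.Xz z1 hz1] at this
    exact (pos_iff_pos_of_mul_pos this).mpr (D.pos z1 hz1)
  have : 1 + c = 1 := by
    have h3 := hab
    rw [hz2e, norm_smul, Real.norm_eq_abs, abs_of_pos hcpos] at h3
    nlinarith
  rw [hz2e, this, one_smul]

theorem cont_h (D : Dat n h X A) : ContinuousOn h {0}ᶜ := D.smooth.continuousOn

theorem F_surj (D : Dat n h X A) (y : Eu n) (hy : y ≠ 0) :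
    ∃ ρ : ℝ, 0 < ρ ∧ ∃ x : Sph n, y = ρ • X x := by
  have hy' : 0 < ‖y‖ := norm_pos_iff.mpr hy
  set x0 : Sph n := ⟨‖y‖⁻¹ • y, by simp [norm_smul, hy'.ne']⟩ with hx0
  have hcs : Continuous (fun x : Sph n => h x) :=
    D.cont_h.comp_continuous continuous_subtype_val (fun x => sph_ne x)
  have hc : Continuous (fun x : Sph n => ⟪y, (x : Eu n)⟫_ℝ / h x) := by
    apply Continuous.div (by fun_prop) hcs
    intro x; exact (D.pos x (sph_ne x)).ne'
  obtain ⟨x, -, hx⟩ := isCompact_univ.exists_isMaxOn (⟨x0, trivial⟩ : (Set.univ : Set (Sph n)).Nonempty) hc.continuousOn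
  have hmax : ∀ x' : Sph n, ⟪y, (x' : Eu n)⟫_ℝ / h x' ≤ ⟪y, (x : Eu n)⟫_ℝ / h x := fun x' =>
    isMaxOn_iff.mp hx x' (Set.mem_univ x')
  set ρ := ⟪y, (x : Eu n)⟫_ℝ / h x with hρ
  have hρpos : 0 < ρ := by
    refine lt_of_lt_of_le ?_ (hmax x0)
    apply div_pos _ (D.pos _ (sph_ne x0))
    simp only [hx0, real_inner_smul_right, real_inner_self_eq_norm_sq]
    positivity
  refine ⟨ρ, hρpos, x, ?_⟩
  have : X x = ρ⁻¹ • y := by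
    apply D.touch _ _ (sph_ne x)
    · intro u
      by_cases hu : u = 0
      · simp [hu, D.h_zero]
      have hu' : 0 < ‖u‖ := norm_pos_iff.mpr hu
      have h1 := hmax ⟨‖u‖⁻¹ • u, by simp [norm_smul, hu'.ne']⟩
      simp only [real_inner_smul_right, D.hom _ (inv_pos.mpr hu')] at h1
      rw [mul_div_mul_left _ _ (inv_pos.mpr hu').ne', div_le_iff₀ (D.pos u hu)] at h1
      rw [real_inner_smul_left, inv_mul_le_iff₀ hρpos]
      exact h1
    · rw [real_inner_smul_left, inv_mul_eq_iff_eq_mul₀ hρpos.ne', hρ, div_mul_cancel₀]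
      exact (D.pos x (sph_ne x)).ne'
  rw [this, smul_smul, mul_inv_cancel₀ hρpos.ne', one_smul]

end Dat

theorem nonpos_of_deriv (g g' : ℝ → ℝ) (δ : ℝ) (hg : ∀ s, 0 ≤ s → s < δ → HasDerivAt g (g' s) s)
    (h0 : g 0 ≤ 0) (hg' : ∀ s, 0 ≤ s → s < δ → g' s ≤ 0) (s : ℝ) (hs : 0 ≤ s) (hsδ : s < δ) :
    g s ≤ 0 := by
  have ha : AntitoneOn g (Set.Icc 0 s) := by
    apply antitoneOn_of_deriv_nonpos (convex_Icc 0 s)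
    · intro r hr
      exact (hg r hr.1 (hr.2.trans_lt hsδ)).continuousAt.continuousWithinAt
    · intro r hr
      rw [interior_Icc] at hr
      exact (hg r hr.1.le (hr.2.trans hsδ)).differentiableAt.differentiableWithinAt
    · intro r hr
      rw [interior_Icc] at hr
      rw [(hg r hr.1.le (hr.2.trans hsδ)).deriv]
      exact hg' r hr.1.le (hr.2.trans hsδ)
  exact (ha ⟨le_rfl, hs⟩ ⟨hs, le_rfl⟩ hs).trans h0

/-- Star-shaped region with radial function `ρ`. -/
def Reg (n : ℕ) (ρ : Sph n → ℝ) : Set (Eu n) :=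
  {z | ∃ x : Sph n, ∃ r : ℝ, 0 < r ∧ r < ρ x ∧ z = r • (x : Eu n)}

theorem Reg_meas (n : ℕ) (ρ : Sph n → ℝ) (hρ : Continuous ρ) : MeasurableSet (Reg n ρ) := by
  set T : Set (Sph n × Set.Ioi (0:ℝ)) := {p | (p.2 : ℝ) < ρ p.1}
  have hT : MeasurableSet T := (isOpen_lt (by fun_prop) (by fun_prop)).measurableSet
  have h2 : Subtype.val '' (homeomorphUnitSphereProd (Eu n) ⁻¹' T) = Reg n ρ := by
    ext z
    constructor
    · rintro ⟨w, hw, rfl⟩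
      refine ⟨(homeomorphUnitSphereProd (Eu n) w).1, (homeomorphUnitSphereProd (Eu n) w).2,
        (homeomorphUnitSphereProd (Eu n) w).2.2, hw, ?_⟩
      have hw0 : (w : Eu n) ≠ 0 := w.2
      simp [smul_smul, hw0]
    · rintro ⟨x, r, hr, hrx, rfl⟩
      refine ⟨(homeomorphUnitSphereProd (Eu n)).symm (x, ⟨r, hr⟩), ?_, ?_⟩
      · change homeomorphUnitSphereProd (Eu n) _ ∈ T
        rw [Homeomorph.apply_symm_apply]
        exact hrx
      · simp
  rw [← h2]
  exact MeasurableSet.subtype_image (measurableSet_singleton _).compl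
    ((homeomorphUnitSphereProd (Eu n)).measurable hT)

theorem Reg_sub (n : ℕ) (ρ : Sph n → ℝ) : Reg n ρ ⊆ {0}ᶜ := by
  rintro z ⟨x, r, hr, -, rfl⟩
  simp [hr.ne', Dat.sph_ne x]

theorem sph_int {n : ℕ} {g : Sph n → ℝ} (hg : Continuous g) : Integrable g (sphMeas n) :=
  Continuous.integrable_of_hasCompactSupport hg (HasCompactSupport.of_compactSpace _)

theorem sph_bdd {n : ℕ} {g : Sph n → ℝ} (hg : Continuous g) : ∃ C, 0 < C ∧ ∀ x, |g x| ≤ C := by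
  obtain ⟨C, hC⟩ := isCompact_univ.exists_bound_of_continuousOn (f := g) hg.continuousOn
  exact ⟨|C| + 1, by positivity, fun x => (hC x trivial).trans ((le_abs_self C).trans (by linarith))⟩

namespace Dat

variable {n : ℕ} {h : Eu n → ℝ} {X : Eu n → Eu n} {A : Eu n → Eu n →L[ℝ] Eu n}

theorem image_meas (D : Dat n h X A) (ρ : Sph n → ℝ) (hρ : Continuous ρ) :
    MeasurableSet (Fm X '' Reg n ρ) :=
  measurable_image_of_fderivWithin (Reg_meas n ρ hρ)
    (fun z hz => (D.F_deriv z (Reg_sub n ρ hz)).hasFDerivWithinAt)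
    (D.F_inj.mono (Reg_sub n ρ))

theorem image_vol (D : Dat n h X A) (ρ : Sph n → ℝ) (hρ : Continuous ρ) (hpos : ∀ x, 0 < ρ x) :
    volume (Fm X '' Reg n ρ) = ENNReal.ofReal (∫ x, ρ x ^ (n+1) / (n+1) ∂sphMeas n) := by
  rw [← polar_vol n ρ hρ hpos (Reg n ρ) rfl,
    ← lintegral_abs_det_fderiv_eq_addHaar_image volume (Reg_meas n ρ hρ)
    (fun z hz => (D.F_deriv z (Reg_sub n ρ hz)).hasFDerivWithinAt)
    (D.F_inj.mono (Reg_sub n ρ))]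
  rw [setLIntegral_congr_fun (g := fun _ => 1) (Reg_meas n ρ hρ)]
  · simp
  · intro z hz
    simp only
    rw [D.F_det z (Reg_sub n ρ hz)]; simp

theorem cont_X (D : Dat n h X A) : Continuous (fun x : Sph n => X x) :=
  D.cX.comp_continuous continuous_subtype_val (fun x => sph_ne x)

theorem cont_A (D : Dat n h X A) : Continuous (fun x : Sph n => A x) :=
  D.cA.comp_continuous continuous_subtype_val (fun x => sph_ne x)

theorem cont_hs (D : Dat n h X A) : Continuous (fun x : Sph n => h x) :=
  D.cont_h.comp_continuous continuous_subtype_val (fun x => sph_ne x)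

theorem taylor (D : Dat n h X A) (v : Eu n) (ε : ℝ) (hε : 0 < ε) :
    ∃ δ > 0, ∀ x : Sph n, ∀ s : ℝ, 0 ≤ s → s < δ →
      h (x + s • v) + h (x - s • v) ≤ 2 * h x + s^2 * (⟪A x v, v⟫_ℝ + ε) := by
  set Q : Set (Eu n) := closedBall 0 (3/2) ∩ {z | 1/2 ≤ ‖z‖} with hQ
  have hQc : IsCompact Q := (isCompact_closedBall 0 _).inter_right
    (isClosed_le continuous_const continuous_norm)
  have hQ0 : ∀ z ∈ Q, z ≠ 0 := by
    rintro z ⟨-, hz⟩ rfl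
    simp at hz
    norm_num at hz
  have hcont : ContinuousOn (fun z => ⟪A z v, v⟫_ℝ) Q := by
    have h1 : ContinuousOn A Q := D.cA.mono hQ0
    exact (h1.clm_apply continuousOn_const).inner continuousOn_const
  have huc := hQc.uniformContinuousOn_of_continuous hcont
  rw [Metric.uniformContinuousOn_iff] at huc
  obtain ⟨d, hd, hdd⟩ := huc ε hε
  have hv : 0 < ‖v‖ + 1 := by positivity
  refine ⟨min (d / (‖v‖+1)) (1 / (2 * (‖v‖+1))), by positivity, ?_⟩
  intro x s hs0 hs1
  have hx1 : ‖(x : Eu n)‖ = 1 := by simp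
  set δ := min (d / (‖v‖+1)) (1 / (2 * (‖v‖+1))) with hδ
  have hsm : ∀ s : ℝ, 0 ≤ s → s < δ → ‖s • v‖ < d ∧ ‖s • v‖ < 1/2 := by
    intro s hs hs'
    have e : ‖s • v‖ ≤ s * (‖v‖ + 1) := by
      rw [norm_smul, Real.norm_eq_abs, abs_of_nonneg hs]; nlinarith
    have h1 := hs'.trans_le (min_le_left _ _)
    have h2 := hs'.trans_le (min_le_right _ _)
    rw [lt_div_iff₀ hv] at h1
    rw [lt_div_iff₀ (by positivity)] at h2
    constructor <;> linarith
  have hmem : ∀ w : Eu n, ‖w‖ < 1/2 → (x : Eu n) + w ∈ Q := by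
    intro w hw
    constructor
    · rw [mem_closedBall_zero_iff]
      have := norm_add_le (x : Eu n) w
      linarith
    · have := norm_sub_norm_le (x : Eu n) (-w)
      rw [norm_neg, sub_neg_eq_add] at this
      simp only [Set.mem_ofPred_eq]
      linarith
  have hsq : ∀ s : ℝ, ∀ w : Eu n, HasDerivAt (fun s : ℝ => (x : Eu n) + s • w) w s := by
    intro s w
    simpa using ((hasDerivAt_id s).smul_const w).const_add (x : Eu n)
  set q := ⟪A x v, v⟫_ℝ + ε with hq
  have hder1 : ∀ w : Eu n, ∀ s : ℝ, ‖s • w‖ < 1/2 →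
      HasDerivAt (fun s : ℝ => h (x + s • w)) ⟪X (x + s • w), w⟫_ℝ s := by
    intro w s hsw
    have := (D.hX _ (hQ0 _ (hmem _ hsw))).comp_hasDerivAt s (hsq s w)
    exact this
  have hder2 : ∀ w : Eu n, ∀ s : ℝ, ‖s • w‖ < 1/2 →
      HasDerivAt (fun s : ℝ => ⟪X (x + s • w), w⟫_ℝ) ⟪A (x + s • w) w, w⟫_ℝ s := by
    intro w s hsw
    have := ((D.hA _ (hQ0 _ (hmem _ hsw))).comp_hasDerivAt s (hsq s w)).inner ℝ (hasDerivAt_const s w)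
    simpa using this
  have main := nonpos_of_deriv
    (fun s => h (x + s • v) + h (x + s • (-v)) - 2 * h x - s^2 * q)
    (fun s => ⟪X (x + s • v), v⟫_ℝ + ⟪X (x + s • (-v)), -v⟫_ℝ - 2 * s * q) δ
    (by
      intro s h0 h1
      have h2 := (hsm s h0 h1).2
      have h3 : ‖s • (-v)‖ < 1/2 := by rwa [smul_neg, norm_neg]
      have := (((hder1 v s h2).add (hder1 (-v) s h3)).sub_const (2 * h x)).sub
        (((hasDerivAt_id s).pow 2).mul_const q)
      refine HasDerivAt.congr_deriv this ?_
      simp)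
    (by simp; linarith)
    (by
      intro s h0 h1
      apply nonpos_of_deriv (fun s => ⟪X (x + s • v), v⟫_ℝ + ⟪X (x + s • (-v)), -v⟫_ℝ - 2 * s * q)
        (fun s => ⟪A (x + s • v) v, v⟫_ℝ + ⟪A (x + s • (-v)) (-v), -v⟫_ℝ - 2 * q) δ _ _ _ s h0 h1
      · intro s h0 h1
        have h2 := (hsm s h0 h1).2
        have h3 : ‖s • (-v)‖ < 1/2 := by rwa [smul_neg, norm_neg]
        have := ((hder2 v s h2).add (hder2 (-v) s h3)).sub
          (((hasDerivAt_id s).const_mul 2).mul_const q)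
        refine HasDerivAt.congr_deriv this ?_
        simp
      · simp
      · intro s h0 h1
        obtain ⟨h2, h2'⟩ := hsm s h0 h1
        have h3 : ‖s • (-v)‖ < 1/2 := by rwa [smul_neg, norm_neg]
        have hxQ : (x : Eu n) ∈ Q := by simpa using hmem 0 (by simp)
        have b1 := hdd _ (hmem _ h2') _ hxQ (by simpa [dist_eq_norm] using h2)
        have b2 := hdd _ (hmem _ h3) _ hxQ (by simpa [dist_eq_norm] using h2)
        rw [Real.dist_eq, abs_lt] at b1 b2
        simp only [map_neg, inner_neg_left, inner_neg_right, neg_neg, hq]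
        linarith [b1.2, b2.2])
    s hs0 hs1
  simp only [smul_neg, ← sub_eq_add_neg] at main
  linarith

end Dat

theorem pow_expand (N : ℕ) : ∃ C : ℝ, 0 < C ∧ ∀ s : ℝ, |s| ≤ 1 →
    |(1 + s)^N - (1 + N * s + (N * (N - 1) / 2 : ℝ) * s^2)| ≤ C * |s|^3 := by
  induction N with
  | zero => exact ⟨1, one_pos, fun s _ => by simp⟩
  | succ N ih =>
    obtain ⟨C, hC, h⟩ := ih
    have hN : (0:ℝ) ≤ N * (N - 1) / 2 := by
      rcases N with _ | N
      · simp
      · push_cast; ring_nf; positivity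
    refine ⟨2 * C + N * (N - 1) / 2, by positivity, fun s hs => ?_⟩
    have e : (1 + s)^(N+1) - (1 + ((N+1 : ℕ) : ℝ) * s + (((N+1 : ℕ) : ℝ) * (((N+1 : ℕ) : ℝ) - 1) / 2) * s^2)
      = (1 + s) * ((1 + s)^N - (1 + N * s + (N * (N - 1) / 2 : ℝ) * s^2)) +
        (N * (N - 1) / 2 : ℝ) * s^3 := by
      push_cast; ring
    rw [e]
    refine (abs_add_le _ _).trans ?_
    rw [abs_mul, abs_mul, abs_pow, abs_of_nonneg hN, add_mul]
    have h1 : |1 + s| ≤ 2 := by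
      refine (abs_add_le _ _).trans ?_
      rw [abs_one]; linarith
    have h2 := mul_le_mul h1 (h s hs) (abs_nonneg _) (by norm_num)
    linarith

namespace Dat

variable {n : ℕ} {h : Eu n → ℝ} {X : Eu n → Eu n} {A : Eu n → Eu n →L[ℝ] Eu n}

theorem half (D : Dat n h X A) (x w : Sph n) (v : Eu n) (c C t r : ℝ) (ht : 0 < t)
    (hCt : C * t < 1) (hφ : |⟪X x, v⟫_ℝ - c| ≤ C) (hc : |c| ≤ C) (hr : 0 < r)
    (hr1 : r < 1 + t * (⟪X x, v⟫_ℝ - c)) :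
    r * ⟪X x, (w : Eu n)⟫_ℝ ≤ C * t * h w - t * c * h w +
      (1 - C * t) * h (w + (t / (1 - C * t) * h w) • v) := by
  have hH := D.pos w (sph_ne w)
  have h1 : 0 < 1 - C * t := by linarith
  rw [abs_le] at hφ hc
  have hs := D.sup x (sph_ne x) (w + (t / (1 - C * t) * h w) • v)
  have ha := D.sup x (sph_ne x) w
  rcases le_or_gt 0 ⟪X x, (w : Eu n)⟫_ℝ with h0 | h0
  · rw [inner_add_right, real_inner_smul_right] at hs
    have h2 := mul_le_mul_of_nonneg_left hs h1.le
    have e : (1 - C * t) * (⟪X x, (w : Eu n)⟫_ℝ + t / (1 - C * t) * h w * ⟪X x, v⟫_ℝ) =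
      (1 - C * t) * ⟪X x, (w : Eu n)⟫_ℝ + t * h w * ⟪X x, v⟫_ℝ := by
      field_simp
    rw [e] at h2
    have h3 := mul_le_mul_of_nonneg_right hr1.le h0
    have h4 : 0 ≤ (C * t + t * (⟪X x, v⟫_ℝ - c)) * (h w - ⟪X x, (w : Eu n)⟫_ℝ) := by
      apply mul_nonneg
      · nlinarith
      · linarith
    nlinarith
  · have h5 : 0 ≤ h (w + (t / (1 - C * t) * h w) • v) := by
      by_cases hz : (w : Eu n) + (t / (1 - C * t) * h w) • v = 0
      · rw [hz, D.h_zero]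
      · exact (D.pos _ hz).le
    have h6 : 0 ≤ t * h w * (C - c) := by
      apply mul_nonneg (by positivity); linarith
    have h7 : r * ⟪X x, (w : Eu n)⟫_ℝ ≤ 0 := mul_nonpos_of_nonneg_of_nonpos hr.le h0.le
    have h8 := mul_nonneg h1.le h5
    linarith

theorem incl (D : Dat n h X A) (v : Eu n) (c ε : ℝ) (hε : 0 < ε) :
    ∃ t0 > 0, ∀ t, 0 < t → t < t0 →
      ∀ a ∈ Fm X '' Reg n (fun x => 1 + t * (⟪X x, v⟫_ℝ - c)),
      ∀ b ∈ Fm X '' Reg n (fun x => 1 - t * (⟪X x, v⟫_ℝ - c)),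
      (1/2 : ℝ) • (a + b) ∈ insert 0
        (Fm X '' Reg n (fun x => 1 + t^2 * (1/2 * h x * ⟪A x v, v⟫_ℝ + ε))) := by
  obtain ⟨C0, hC0, hC0'⟩ := sph_bdd (n := n) (g := fun x => ⟪X x, v⟫_ℝ - c)
    ((D.cont_X.inner continuous_const).sub continuous_const)
  set C := C0 + |c| with hC
  have hCpos : 0 < C := by positivity
  obtain ⟨M, hM, hM'⟩ := sph_bdd (n := n) (g := fun x => 1/2 * h x * ⟪A x v, v⟫_ℝ + ε)
    (((continuous_const.mul D.cont_hs).mul ((D.cont_A.clm_apply continuous_const).inner continuous_const)).add continuous_const)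
  obtain ⟨B, hB, hB'⟩ := sph_bdd (n := n) (g := fun x => h x) D.cont_hs
  obtain ⟨δ, hδ, hT⟩ := D.taylor v (ε / (2 * B)) (by positivity)
  refine ⟨min (1 / (2 * C)) (min (ε / (4 * C * M)) (δ / (2 * B))), by positivity, ?_⟩
  rintro t ht ht' _ ⟨_, ⟨x, r, hr, hr1, rfl⟩, rfl⟩ _ ⟨_, ⟨y, s, hs, hs1, rfl⟩, rfl⟩
  have t1 := ht'.trans_le (min_le_left _ _)
  have t2 := (ht'.trans_le (min_le_right _ _)).trans_le (min_le_left _ _)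
  have t3 := (ht'.trans_le (min_le_right _ _)).trans_le (min_le_right _ _)
  rw [lt_div_iff₀ (by positivity)] at t1 t2 t3
  have hF : ∀ r : ℝ, 0 < r → ∀ x : Sph n, Fm X (r • (x : Eu n)) = r • X x := by
    intro r hr x
    simp [Fm, D.Xhom r hr, norm_smul, abs_of_pos hr]
  rw [hF r hr, hF s hs]
  by_cases hy : (1/2 : ℝ) • (r • X x + s • X y) = 0
  · left; exact hy
  right
  obtain ⟨ρ, hρ, w, hw⟩ := D.F_surj _ hy
  refine ⟨ρ • (w : Eu n), ⟨w, ρ, hρ, ?_, rfl⟩, by rw [hF ρ hρ, hw]⟩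
  have hH := D.pos w (sph_ne w)
  have hHB : h w ≤ B := (le_abs_self _).trans (hB' w)
  have hCt : C * t < 1/2 := by linarith
  have a1 := D.half x w v c C t r ht (by linarith) ((hC0' x).trans (by rw [hC]; linarith [abs_nonneg c]))
    (by rw [hC]; linarith) hr hr1
  have a2 := D.half y w (-v) (-c) C t s ht (by linarith)
    (by
      have := hC0' y
      rw [inner_neg_right, ← abs_neg]
      refine le_trans (le_of_eq ?_) (this.trans (by rw [hC]; linarith [abs_nonneg c] : C0 ≤ C))
      congr 1; ring)
    (by rw [abs_neg, hC]; linarith) hs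
    (by rw [inner_neg_right]; linarith)
  have h1 : 0 < 1 - C * t := by linarith
  set s' := t / (1 - C * t) * h w with hs'
  have hs'0 : 0 ≤ s' := by positivity
  have hs'1 : s' < δ := by
    have : t / (1 - C * t) ≤ 2 * t := by
      rw [div_le_iff₀ h1]; nlinarith
    calc s' ≤ 2 * t * B := by rw [hs']; gcongr
      _ < δ := by linarith
  have ht := hT w s' hs'0 hs'1
  have e := congrArg (fun p => ⟪p, (w : Eu n)⟫_ℝ) hw
  simp only [real_inner_smul_left, inner_add_left, D.Xz _ (sph_ne w)] at e
  rw [smul_neg, ← sub_eq_add_neg] at a2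
  have b1 := mul_le_mul_of_nonneg_left ht h1.le
  have b2 : ρ * h w ≤ C * t * h w + (1 - C * t) * (h w + 1/2 * (s'^2 * (⟪A w v, v⟫_ℝ + ε / (2 * B)))) := by
    linarith
  have b3 : (1 - C * t) * (h w + 1/2 * (s'^2 * (⟪A w v, v⟫_ℝ + ε / (2 * B)))) =
     (1 - C * t) * h w + h w * (t^2 / (1 - C * t) * (1/2 * h w * ⟪A w v, v⟫_ℝ + h w * (ε / (4 * B)))) := by
    rw [hs']; field_simp; ring
  rw [b3] at b2
  have b4 : ρ ≤ 1 + t^2 / (1 - C * t) * (1/2 * h w * ⟪A w v, v⟫_ℝ + h w * (ε / (4 * B))) := by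
    apply le_of_mul_le_mul_right _ hH
    linarith
  refine b4.trans_lt ?_
  have b5 : h w * (ε / (4 * B)) ≤ ε / 4 := by
    calc h w * (ε / (4 * B)) ≤ B * (ε / (4 * B)) := by gcongr
      _ = ε / 4 := by field_simp
  have hMw := (abs_le.mp (hM' w)).2
  set G := 1/2 * h w * ⟪A w v, v⟫_ℝ with hG
  have b6 : C * t * (G + ε) ≤ ε / 4 := by
    calc C * t * (G + ε) ≤ C * t * M := by gcongr
      _ ≤ ε / 4 := by linarith
  have b7 : G + h w * (ε / (4 * B)) < (1 - C * t) * (G + ε) := by linarith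
  have b8 : t^2 / (1 - C * t) * (G + h w * (ε / (4 * B))) < t^2 / (1 - C * t) * ((1 - C * t) * (G + ε)) := by
    gcongr
  have b9 : t^2 / (1 - C * t) * ((1 - C * t) * (G + ε)) = t^2 * (G + ε) := by
    rw [← mul_assoc, div_mul_cancel₀ _ h1.ne']
  change _ < 1 + t^2 * (G + ε)
  linarith

end Dat

theorem int_pow_expand (n N : ℕ) : ∃ C : ℝ, 0 < C ∧ ∀ (g : Sph n → ℝ) (b : ℝ), Continuous g →
    b ≤ 1 → (∀ x, |g x| ≤ b) →
    |∫ x, (1 + g x)^N ∂sphMeas n - ((sphMeas n).real Set.univ + N * ∫ x, g x ∂sphMeas n +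
      (N * (N - 1) / 2 : ℝ) * ∫ x, g x ^ 2 ∂sphMeas n)| ≤ C * b^3 := by
  obtain ⟨C, hC, h⟩ := pow_expand N
  refine ⟨C * ((sphMeas n).real Set.univ + 1), by positivity, fun g b hg hb hgb => ?_⟩
  have e : ∫ x, (1 + g x)^N ∂sphMeas n - ((sphMeas n).real Set.univ + N * ∫ x, g x ∂sphMeas n +
      (N * (N - 1) / 2 : ℝ) * ∫ x, g x ^ 2 ∂sphMeas n) =
      ∫ x, ((1 + g x)^N - (1 + N * g x + (N * (N - 1) / 2 : ℝ) * g x ^2)) ∂sphMeas n := by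
    rw [integral_sub (sph_int (by fun_prop)) (sph_int (by fun_prop)),
      integral_add (sph_int (by fun_prop)) (sph_int (by fun_prop)),
      integral_add (sph_int (by fun_prop)) (sph_int (by fun_prop)),
      integral_const_mul, integral_const_mul]
    simp
  rw [e]
  have := norm_integral_le_of_norm_le_const (μ := sphMeas n) (C := C * b^3)
    (f := fun x => ((1 + g x)^N - (1 + N * g x + (N * (N - 1) / 2 : ℝ) * g x ^2)))
    (ae_of_all _ fun x => by
      have h1 := h (g x) ((hgb x).trans hb)
      refine h1.trans ?_
      have := hgb x
      gcongr)
  refine this.trans ?_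
  rcases isEmpty_or_nonempty (Sph n) with he | ⟨⟨x⟩⟩
  · have h0 : (sphMeas n).real Set.univ = 0 := by
      rw [Set.univ_eq_empty_iff.mpr he]; simp
    exfalso
    exact he.elim ⟨EuclideanSpace.single 0 1, by simp⟩
  · have hb0 : 0 ≤ b := (abs_nonneg _).trans (hgb x)
    nlinarith [mul_nonneg hC.le (pow_nonneg hb0 3)]

namespace Dat

variable {n : ℕ} {h : Eu n → ℝ} {X : Eu n → Eu n} {A : Eu n → Eu n →L[ℝ] Eu n}

set_option maxHeartbeats 1000000 in
theorem local_bm_eps (D : Dat n h X A) (v : Eu n) (c ε : ℝ) (hε : 0 < ε)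
    (hc : ∫ x : Sph n, (⟪X x, v⟫_ℝ - c) ∂sphMeas n = 0) :
    n / 2 * ∫ x : Sph n, (⟪X x, v⟫_ℝ - c)^2 ∂sphMeas n ≤
      ∫ x : Sph n, (1/2 * h x * ⟪A x v, v⟫_ℝ + ε) ∂sphMeas n := by
  set φ : Sph n → ℝ := fun x => ⟪X x, v⟫_ℝ - c with hφ
  set κ : Sph n → ℝ := fun x => 1/2 * h x * ⟪A x v, v⟫_ℝ + ε with hκ
  have cφ : Continuous φ := (D.cont_X.inner continuous_const).sub continuous_const
  have cκ : Continuous κ := ((continuous_const.mul D.cont_hs).mul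
    ((D.cont_A.clm_apply continuous_const).inner continuous_const)).add continuous_const
  obtain ⟨B1, hB1, hB1'⟩ := sph_bdd cφ
  obtain ⟨B2, hB2, hB2'⟩ := sph_bdd cκ
  obtain ⟨C, hC, hexp⟩ := int_pow_expand n (n+1)
  obtain ⟨t0, ht0, hincl⟩ := D.incl v c ε hε
  set V := (sphMeas n).real Set.univ with hV
  set P := ∫ x, φ x ^ 2 ∂sphMeas n with hP
  set k := ∫ x, κ x ∂sphMeas n with hk
  set q := ∫ x, κ x ^ 2 ∂sphMeas n with hq
  have hq0 : 0 ≤ q := integral_nonneg fun x => sq_nonneg _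
  have hV0 : 0 < V := by
    have : Nonempty (Sph n) := ⟨⟨EuclideanSpace.single 0 1, by simp⟩⟩
    rw [hV, Measure.real, ENNReal.toReal_pos_iff]
    exact ⟨Measure.measure_univ_pos.mpr (by
      intro h0
      have := IsOpen.measure_ne_zero (sphMeas n) isOpen_univ Set.univ_nonempty
      rw [h0] at this
      simp at this), measure_lt_top _ _⟩
  set c2 : ℝ := (((n+1 : ℕ) : ℝ) * (((n+1 : ℕ) : ℝ) - 1) / 2) with hc2
  have hc20 : 0 ≤ c2 := by rw [hc2]; push_cast; ring_nf; positivity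
  have hP0 : 0 ≤ P := integral_nonneg fun x => sq_nonneg _
  set E := C * B1^3 + c2 * q + C * B2^3 with hE
  have key : ∀ t, 0 < t → t < 1 → t < t0 → t < 1 / (2 * B1) → t < 1 / (2 * B2) → t < V / (C * B1^3) →
      c2 * P - (n+1) * k ≤ E * t := by
    intro t ht ht1 htt0 htB1 htB2 htV
    rw [lt_div_iff₀ (by positivity)] at htB1 htB2 htV
    have hb1 : ∀ x, |t * φ x| ≤ t * B1 := fun x => by
      rw [abs_mul, abs_of_pos ht]; have := hB1' x; gcongr
    have hb1' : ∀ x, |-(t * φ x)| ≤ t * B1 := fun x => by rw [abs_neg]; exact hb1 x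
    have htt : t^2 ≤ t := by nlinarith
    have hb2 : ∀ x, |t^2 * κ x| ≤ t^2 * B2 := fun x => by
      rw [abs_mul, abs_of_pos (by positivity)]; have := hB2' x; gcongr
    have s1 : t * B1 ≤ 1/2 := by linarith
    have s2 : t^2 * B2 ≤ 1/2 := by nlinarith
    have pos1 : ∀ x, 0 < 1 + t * φ x := fun x => by linarith [(abs_le.mp (hb1 x)).1]
    have pos2 : ∀ x, 0 < 1 - t * φ x := fun x => by linarith [(abs_le.mp (hb1 x)).2]
    have pos3 : ∀ x, 0 < 1 + t^2 * κ x := fun x => by linarith [(abs_le.mp (hb2 x)).1]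
    have c1 : Continuous fun x => 1 + t * φ x := by fun_prop
    have c2' : Continuous fun x => 1 - t * φ x := by fun_prop
    have c3 : Continuous fun x => 1 + t^2 * κ x := by fun_prop
    have bm := bm_eu (n+1) _ _ _ (D.image_meas _ c1) (D.image_meas _ c2') (hincl t ht htt0)
    rw [measure_congr (insert_ae_eq_self _ _)] at bm
    rw [D.image_vol _ c1 pos1, D.image_vol _ c2' pos2] at bm
    have hv3 := D.image_vol _ c3 pos3
    simp only [hκ] at hv3
    rw [hv3, ← ENNReal.ofReal_mul (integral_nonneg fun x => by have := (pos1 x).le; positivity),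
      ← ENNReal.ofReal_pow (integral_nonneg fun x => by have := (pos3 x).le; positivity),
      ENNReal.ofReal_le_ofReal_iff (by positivity)] at bm
    simp only [integral_div] at bm
    have e1 := hexp (fun x => t * φ x) (t * B1) (by fun_prop) (by linarith) hb1
    have e2 := hexp (fun x => -(t * φ x)) (t * B1) (by fun_prop) (by linarith) hb1'
    have e3 := hexp (fun x => t^2 * κ x) (t^2 * B2) (by fun_prop) (by linarith) hb2
    simp only [mul_pow, integral_const_mul, neg_sq, integral_neg, ← sub_eq_add_neg] at e1 e2 e3
    rw [show ∫ x, φ x ∂sphMeas n = 0 from hc] at e1 e2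
    simp only [mul_zero, neg_zero, add_zero] at e1 e2
    rw [← hP] at e1 e2
    rw [← hk, ← hq] at e3
    set a1 := ∫ x, (1 + t * φ x)^(n+1) ∂sphMeas n
    set a2 := ∫ x, (1 - t * φ x)^(n+1) ∂sphMeas n
    set b := ∫ x, (1 + t^2 * κ x)^(n+1) ∂sphMeas n
    have hb0 : 0 ≤ b := integral_nonneg fun x => by have := (pos3 x).le; positivity
    have bm2 : a1 * a2 ≤ b^2 := by
      have hn : (0:ℝ) < n + 1 := by positivity
      change a1 / (n+1) * (a2 / (n+1)) ≤ (b / (n+1))^2 at bm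
      rw [div_mul_div_comm, div_pow, ← sq, div_le_div_iff_of_pos_right (by positivity)] at bm
      exact bm
    have l1 := (abs_le.mp e1).1
    have l2 := (abs_le.mp e2).1
    have l3 := (abs_le.mp e3).2
    set Lo := V + c2 * (t^2 * P) - C * (t^3 * B1^3) with hLo
    have hLo0 : 0 ≤ Lo := by
      have : C * (t^3 * B1^3) ≤ V := by
        have : t^3 ≤ t := by
          calc t^3 = t^2 * t := by ring
            _ ≤ 1 * t := by gcongr; linarith
            _ = t := one_mul _
        calc C * (t^3 * B1^3) ≤ C * (t * B1^3) := by gcongr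
          _ ≤ V := by linarith
      have := mul_nonneg hc20 (mul_nonneg (sq_nonneg t) hP0)
      linarith
    have hLob : Lo ≤ b := by
      have h1 : Lo ≤ a1 := by linarith
      have h2 : Lo ≤ a2 := by linarith
      have : Lo^2 ≤ b^2 := by
        refine le_trans ?_ bm2
        rw [sq]; exact mul_le_mul h1 h2 hLo0 (hLo0.trans h1)
      exact le_of_sq_le_sq this hb0
    have f1 : t^2 * (c2 * P - (n+1) * k) ≤ t^2 * (E * t) := by
      push_cast at l3
      have g1 : (t^2)^2 * q ≤ t^3 * q := by
        have : (t^2)^2 ≤ t^3 := by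
          calc (t^2)^2 = t^3 * t := by ring
            _ ≤ t^3 * 1 := by gcongr
            _ = t^3 := mul_one _
        gcongr
      have g2 : (t^2)^3 * B2^3 ≤ t^3 * B2^3 := by
        have : (t^2)^3 ≤ t^3 := by gcongr
        gcongr
      have g3 := mul_le_mul_of_nonneg_left g1 hc20
      have g4 := mul_le_mul_of_nonneg_left g2 hC.le
      rw [hE]
      clear_value c2 Lo
      subst hLo
      linarith
    exact le_of_mul_le_mul_left f1 (by positivity)
  have lim : c2 * P - (n+1) * k ≤ 0 := by
    have ht : Filter.Tendsto (fun t : ℝ => E * t) (𝓝[>] 0) (𝓝 0) := by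
      have : Filter.Tendsto (fun t : ℝ => E * t) (𝓝 0) (𝓝 (E * 0)) := (continuous_const.mul continuous_id).tendsto _
      rw [mul_zero] at this
      exact this.mono_left nhdsWithin_le_nhds
    apply ge_of_tendsto ht
    have ev : ∀ d : ℝ, 0 < d → ∀ᶠ t in 𝓝[>] (0:ℝ), t < d := fun d hd =>
      nhdsWithin_le_nhds (gt_mem_nhds hd)
    filter_upwards [self_mem_nhdsWithin, ev 1 one_pos, ev t0 ht0, ev (1/(2*B1)) (by positivity),
      ev (1/(2*B2)) (by positivity), ev (V/(C*B1^3)) (by positivity)] with t p1 p2 p3 p4 p5 p6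
    exact key t p1 p2 p3 p4 p5 p6
  rw [hc2] at lim
  push_cast at lim
  have hn : (0:ℝ) < n + 1 := by positivity
  apply le_of_mul_le_mul_left _ hn
  linarith

theorem local_bm (D : Dat n h X A) (v : Eu n) (c : ℝ)
    (hc : ∫ x : Sph n, (⟪X x, v⟫_ℝ - c) ∂sphMeas n = 0) :
    n * ∫ x : Sph n, (⟪X x, v⟫_ℝ - c)^2 ∂sphMeas n ≤
      ∫ x : Sph n, h x * ⟪A x v, v⟫_ℝ ∂sphMeas n := by
  set V := (sphMeas n).real Set.univ with hV
  have hV0 : 0 ≤ V := measureReal_nonneg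
  apply le_of_forall_pos_le_add
  intro η hη
  have := D.local_bm_eps v c (η / (2 * (V + 1))) (by positivity) hc
  have i1 := sph_int (g := fun x : Sph n => 1/2 * (h x * ⟪A x v, v⟫_ℝ))
    (continuous_const.mul (D.cont_hs.mul ((D.cont_A.clm_apply continuous_const).inner continuous_const)))
  simp only [mul_assoc] at this i1
  rw [integral_add i1 (integrable_const _), integral_const_mul, integral_const, ← hV, smul_eq_mul] at this
  have e : V * (η / (2 * (V + 1))) ≤ η / 2 := by
    rw [mul_div_assoc', div_le_div_iff₀ (by positivity) (by positivity)]
    nlinarith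
  linarith

end Dat

namespace Dat

variable {n : ℕ} {h : Eu n → ℝ} {X : Eu n → Eu n} {A : Eu n → Eu n →L[ℝ] Eu n}

theorem X_smooth (D : Dat n h X A) (v : Eu n) : ContDiffOn ℝ 1 (fun z => ⟪X z, v⟫_ℝ) {0}ᶜ := by
  have := (D.smooth.fderiv_of_isOpen (m := 1) isOpen_compl_singleton (by norm_num)).clm_apply
    (contDiffOn_const (c := v))
  refine this.congr ?_
  intro z hz
  rw [(D.hX z hz).fderiv]; simp

theorem ibp_hX (D : Dat n h X A) (v : Eu n) :
    ∫ x : Sph n, (⟪X x, v⟫_ℝ ^ 2 + h x * ⟪A x v, v⟫_ℝ) ∂sphMeas n =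
      (n + 1) * ∫ x : Sph n, ⟪(x : Eu n), v⟫_ℝ * (h x * ⟪X x, v⟫_ℝ) ∂sphMeas n := by
  rw [← ibp n (fun z => h z * ⟪X z, v⟫_ℝ) ((D.smooth.of_le (by norm_num)).mul (D.X_smooth v))
    (by intro r hr z; simp only [D.hom r hr, D.Xhom r hr]; ring) v]
  congr 1
  ext x
  have hx := sph_ne x
  have h1 := ((D.hX x hx).mul ((D.hA x hx).inner ℝ (hasFDerivAt_const v _))).fderiv
  change fderiv ℝ (fun z => h z * ⟪X z, v⟫_ℝ) x = _ at h1
  rw [h1]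
  simp [fderivInnerCLM_apply]
  ring

theorem ibp_h (D : Dat n h X A) (v : Eu n) :
    ∫ x : Sph n, ⟪X x, v⟫_ℝ ∂sphMeas n =
      (n + 1) * ∫ x : Sph n, ⟪(x : Eu n), v⟫_ℝ * h x ∂sphMeas n := by
  rw [← ibp n h (D.smooth.of_le (by norm_num)) D.hom v]
  congr 1
  ext x
  rw [(D.hX x (sph_ne x)).fderiv]; simp

end Dat

theorem int3 {n : ℕ} (f : Sph n → ℝ) (hf : Continuous f) (c : ℝ) :
    ∫ x, (f x ^ 2 - 2 * c * f x + c ^ 2) ∂sphMeas n = ∫ x, f x ^ 2 ∂sphMeas n -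
      2 * c * ∫ x, f x ∂sphMeas n + (sphMeas n).real Set.univ * c ^ 2 := by
  rw [integral_add (sph_int (by fun_prop)) (sph_int (by fun_prop)),
    integral_sub (sph_int (by fun_prop)) (sph_int (by fun_prop)), integral_const_mul, integral_const,
    smul_eq_mul]

theorem int6 {n : ℕ} (f1 f2 f3 f4 f5 : Sph n → ℝ) (c : ℝ) (h1 : Continuous f1) (h2 : Continuous f2)
    (h3 : Continuous f3) (h4 : Continuous f4) (h5 : Continuous f5) :
    ∫ x, (f1 x - 2 * f2 x + c - f3 x + 2 * f4 x - f5 x) ∂sphMeas n = ∫ x, f1 x ∂sphMeas n -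
      2 * ∫ x, f2 x ∂sphMeas n + (sphMeas n).real Set.univ * c - ∫ x, f3 x ∂sphMeas n +
      2 * ∫ x, f4 x ∂sphMeas n - ∫ x, f5 x ∂sphMeas n := by
  rw [integral_sub (sph_int (by fun_prop)) (sph_int (by fun_prop)),
    integral_add (sph_int (by fun_prop)) (sph_int (by fun_prop)),
    integral_sub (sph_int (by fun_prop)) (sph_int (by fun_prop)),
    integral_add (sph_int (by fun_prop)) (sph_int (by fun_prop)),
    integral_sub (sph_int (by fun_prop)) (sph_int (by fun_prop)), integral_const_mul,
    integral_const_mul, integral_const, smul_eq_mul]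

theorem ibp_lin (n : ℕ) (v : Eu n) :
    (sphMeas n).real Set.univ * ‖v‖^2 = (n + 1) * ∫ x : Sph n, ⟪(x : Eu n), v⟫_ℝ ^ 2 ∂sphMeas n := by
  have := ibp n (fun z => innerSL ℝ v z) (innerSL ℝ v).contDiff.contDiffOn (by
    intro r hr z; simp) v
  have hf : ∀ z, fderiv ℝ (fun z => innerSL ℝ v z) z = innerSL ℝ v := fun z => (innerSL ℝ v).fderiv
  simp only [hf] at this
  simp only [innerSL_apply_apply, real_inner_self_eq_norm_sq, integral_const, smul_eq_mul] at this
  rw [this]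
  congr 2
  ext x
  rw [real_inner_comm (x : Eu n) v]; ring

namespace Dat

variable {n : ℕ} {h : Eu n → ℝ} {X : Eu n → Eu n} {A : Eu n → Eu n →L[ℝ] Eu n}

theorem rigid (D : Dat n h X A) : ∃ m : Eu n, ∀ x : Sph n,
    X x - m - (h x - ⟪(x : Eu n), m⟫_ℝ) • (x : Eu n) = 0 := by
  set V := (sphMeas n).real Set.univ with hV
  have hV0 : 0 < V := by
    have : Nonempty (Sph n) := ⟨⟨EuclideanSpace.single 0 1, by simp⟩⟩
    have := IsOpen.measure_ne_zero (sphMeas n) isOpen_univ Set.univ_nonempty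
    exact ENNReal.toReal_pos this (measure_ne_top _ _)
  set e : Fin (n+1) → Eu n := fun i => EuclideanSpace.single i 1 with he
  have hin : ∀ (y : Eu n) i, ⟪y, e i⟫_ℝ = y i := by
    intro y i
    rw [he, EuclideanSpace.inner_single_right]; simp only [one_mul, conj_trivial]
  set m : Eu n := WithLp.toLp 2 (fun i => (∫ x : Sph n, X x i ∂sphMeas n) / V) with hm
  have hmi : ∀ i, ∫ x : Sph n, X x i ∂sphMeas n = V * m i := by
    intro i
    simp only [hm]; field_simp
  have cX := D.cont_X
  have ch := D.cont_hs
  have cXi : ∀ i, Continuous (fun x : Sph n => X x i) := fun i => by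
    simp only [← hin]
    exact cX.inner continuous_const
  have cAi : ∀ i, Continuous (fun x : Sph n => ⟪A x (e i), e i⟫_ℝ) := fun i =>
    (D.cont_A.clm_apply continuous_const).inner continuous_const
  have cx : ∀ i, Continuous (fun x : Sph n => (x : Eu n) i) := fun i => by
    simp only [← hin]
    exact continuous_subtype_val.inner continuous_const
  have iX2 : ∀ i, Integrable (fun x : Sph n => X x i ^ 2) (sphMeas n) := fun i =>
    sph_int ((cXi i).pow 2)
  have ixh : ∀ i, Integrable (fun x : Sph n => (x : Eu n) i * (h x * X x i)) (sphMeas n) := fun i =>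
    sph_int ((cx i).mul (ch.mul (cXi i)))
  have iXm : ∀ (i) (c : ℝ), Integrable (fun x : Sph n => X x i * c) (sphMeas n) := fun i c =>
    sph_int ((cXi i).mul continuous_const)
  have step : ∀ i, (n+1) * ∫ x : Sph n, (X x i)^2 ∂sphMeas n - n * (V * m i ^ 2) ≤
      (n+1) * ∫ x : Sph n, (x : Eu n) i * (h x * X x i) ∂sphMeas n := by
    intro i
    have b1 := D.local_bm (e i) (m i) (by
      simp only [hin]
      rw [integral_sub (sph_int (cXi i)) (integrable_const _), hmi]
      simp [hV])
    have b2 := D.ibp_hX (e i)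
    simp only [hin] at b1 b2
    have cc : Continuous (fun x : Sph n => h x * (A x (e i)) i) := by
      simp only [← hin]; exact ch.mul (cAi i)
    rw [integral_add (iX2 i) (sph_int cc)] at b2
    have b3 : ∫ x : Sph n, (X x i - m i)^2 ∂sphMeas n = ∫ x : Sph n, (X x i)^2 ∂sphMeas n - V * m i ^2 := by
      have : ∀ x : Sph n, (X x i - m i)^2 = (X x i)^2 - (2 * m i) * X x i + m i ^ 2 := fun x => by ring
      simp only [this]
      have cf := cXi i
      rw [int3 _ cf, hmi i]
      ring
    rw [b3] at b1
    linarith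
  have nsq : ∀ y : Eu n, ‖y‖^2 = ∑ i, y i ^ 2 := fun y => EuclideanSpace.real_norm_sq_eq y
  have inn : ∀ y z : Eu n, ⟪y, z⟫_ℝ = ∑ i, y i * z i := fun y z => by
    rw [PiLp.inner_apply]; simp [mul_comm]
  have tot := Finset.sum_le_sum (s := Finset.univ) fun i _ => step i
  rw [Finset.sum_sub_distrib, ← Finset.mul_sum, ← Finset.mul_sum, ← Finset.mul_sum, ← Finset.mul_sum,
    ← nsq, ← integral_finsetSum _ fun i _ => iX2 i,
    ← integral_finsetSum _ fun i _ => ixh i] at tot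
  have t1 : ∀ x : Sph n, ∑ i, (x : Eu n) i * (h x * X x i) = h x ^ 2 := by
    intro x
    rw [sq]
    nth_rewrite 2 [← D.Xz x (sph_ne x)]
    rw [inn, Finset.sum_mul]
    exact Finset.sum_congr rfl fun i _ => by ring
  simp only [t1, ← nsq] at tot
  have j3 : ∫ x : Sph n, ⟪X x, m⟫_ℝ ∂sphMeas n = V * ‖m‖^2 := by
    simp only [inn]
    rw [integral_finsetSum _ fun i _ => iXm i _, nsq, Finset.mul_sum]
    refine Finset.sum_congr rfl fun i _ => ?_
    rw [integral_mul_const, hmi]; ring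
  have j4 := D.ibp_h m
  rw [j3] at j4
  have j5 := ibp_lin n m
  rw [← hV] at j5
  refine ⟨m, ?_⟩
  set W : Sph n → Eu n := fun x => X x - m - (h x - ⟪(x : Eu n), m⟫_ℝ) • (x : Eu n) with hW
  have cxm : Continuous (fun x : Sph n => ⟪(x : Eu n), m⟫_ℝ) := continuous_subtype_val.inner continuous_const
  have cXm : Continuous (fun x : Sph n => ⟪X x, m⟫_ℝ) := cX.inner continuous_const
  have cW : Continuous W := (cX.sub continuous_const).sub ((ch.sub cxm).smul continuous_subtype_val)
  have hWn : ∀ x, ‖W x‖^2 = ‖X x‖^2 - 2 * ⟪X x, m⟫_ℝ + ‖m‖^2 - h x ^ 2 + 2 * (⟪(x : Eu n), m⟫_ℝ * h x)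
      - ⟪(x : Eu n), m⟫_ℝ ^ 2 := by
    intro x
    have hx1 : ‖(x : Eu n)‖ = 1 := by simp
    rw [hW]
    simp only
    rw [norm_sub_sq_real, norm_sub_sq_real, norm_smul, real_inner_smul_right, inner_sub_left,
      D.Xz x (sph_ne x), real_inner_comm (x : Eu n) m, mul_pow, hx1, Real.norm_eq_abs, sq_abs]
    ring
  have hIntg : ∫ x, ‖W x‖^2 ∂sphMeas n ≤ 0 := by
    simp only [hWn]
    refine le_trans (le_of_eq (int6 _ _ _ _ _ (‖m‖^2) (cX.norm.pow 2) cXm (ch.pow 2) (cxm.mul ch) (cxm.pow 2))) ?_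
    change ∫ x : Sph n, ‖X x‖^2 ∂sphMeas n - 2 * ∫ x : Sph n, ⟪X x, m⟫_ℝ ∂sphMeas n + V * ‖m‖^2
      - ∫ x : Sph n, h x ^ 2 ∂sphMeas n + 2 * ∫ x : Sph n, ⟪(x : Eu n), m⟫_ℝ * h x ∂sphMeas n
      - ∫ x : Sph n, ⟪(x : Eu n), m⟫_ℝ ^ 2 ∂sphMeas n ≤ 0
    rw [j3]
    have hn : (0:ℝ) < n + 1 := by positivity
    apply nonpos_of_mul_nonpos_right _ hn
    linarith
  intro x
  by_contra hne
  have : 0 < ∫ x, ‖W x‖^2 ∂sphMeas n := by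
    apply Continuous.integral_pos_of_hasCompactSupport_nonneg_nonzero (x := x) (cW.norm.pow 2)
      (HasCompactSupport.of_compactSpace _)
    · intro x; exact sq_nonneg ‖W x‖
    · have : W x ≠ 0 := hne
      exact pow_ne_zero 2 (norm_ne_zero_iff.mpr this)
  linarith

end Dat

theorem norm_fderiv {n : ℕ} (z : Eu n) (hz : z ≠ 0) :
    HasFDerivAt (fun z : Eu n => ‖z‖) (‖z‖⁻¹ • innerSL ℝ z) z := by
  have h0 := (hasStrictFDerivAt_norm_sq z).hasFDerivAt.sqrt (by simpa using hz)
  have e : (fun z : Eu n => √(‖z‖^2)) = fun z => ‖z‖ := by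
    funext z; exact Real.sqrt_sq (norm_nonneg _)
  rw [e] at h0
  have e3 : (1 / (2 * √(‖z‖ ^ 2))) • 2 • (innerSL ℝ) z = ‖z‖⁻¹ • innerSL ℝ z := by
    rw [Real.sqrt_sq (norm_nonneg _)]
    ext v
    simp
    ring
  rw [← e3]; exact h0

namespace Dat

variable {n : ℕ} {h : Eu n → ℝ} {X : Eu n → Eu n} {A : Eu n → Eu n →L[ℝ] Eu n}

theorem h_form (D : Dat n h X A) (hn : 1 ≤ n) : ∃ (m : Eu n) (c : ℝ), ∀ z : Eu n, z ≠ 0 →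
    h z = c * ‖z‖ + ⟪m, z⟫_ℝ ∧ ‖z‖ • X z = c • z + ‖z‖ • m := by
  obtain ⟨m, hm⟩ := D.rigid
  have hX : ∀ z : Eu n, z ≠ 0 → X z = m + ((h z - ⟪m, z⟫_ℝ) / ‖z‖^2) • z := by
    intro z hz
    have hz' : 0 < ‖z‖ := norm_pos_iff.mpr hz
    have := hm ⟨‖z‖⁻¹ • z, by simp [norm_smul, hz'.ne']⟩
    simp only [D.Xhom _ (inv_pos.mpr hz'), D.hom _ (inv_pos.mpr hz'), real_inner_smul_left] at this
    rw [sub_eq_zero, sub_eq_iff_eq_add, smul_smul] at this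
    rw [this, add_comm, real_inner_comm]
    congr 2
    field_simp
  set g : Eu n → ℝ := fun z => (h z - ⟪m, z⟫_ℝ) * ‖z‖⁻¹ with hg
  have hder : ∀ z : Eu n, z ≠ 0 → HasFDerivAt g (0 : Eu n →L[ℝ] ℝ) z := by
    intro z hz
    have hz' : 0 < ‖z‖ := norm_pos_iff.mpr hz
    have h1 := (D.hX z hz).sub (innerSL ℝ m).hasFDerivAt
    have h2 := (hasDerivAt_inv hz'.ne').comp_hasFDerivAt z (norm_fderiv z hz)
    have h3 := h1.mul h2
    refine HasFDerivAt.congr_fderiv (f := g) h3 ?_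
    ext v
    simp [hX z hz, inner_add_left, inner_smul_left]
    field_simp
    ring
  have hpc : IsPreconnected ({0}ᶜ : Set (Eu n)) := by
    apply (isConnected_compl_singleton_of_one_lt_rank _ _).isPreconnected
    rw [← Module.finrank_eq_rank]
    simp only [finrank_euclideanSpace, Fintype.card_fin]
    exact_mod_cast (by omega : 1 < n + 1)
  obtain ⟨c, hc⟩ := isOpen_compl_singleton.exists_is_const_of_fderiv_eq_zero (𝕜 := ℝ) hpc
    (fun z hz => (hder z hz).differentiableAt.differentiableWithinAt)
    (fun z hz => (hder z hz).fderiv)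
  refine ⟨m, c, fun z hz => ?_⟩
  have hz' : 0 < ‖z‖ := norm_pos_iff.mpr hz
  have h1 : (h z - ⟪m, z⟫_ℝ) * ‖z‖⁻¹ = c := hc z hz
  constructor
  · rw [← h1]; field_simp; ring
  · rw [hX z hz, smul_add, smul_smul, ← h1, add_comm]
    congr 2
    field_simp

theorem h_eq (D : Dat n h X A) (hn : 1 ≤ n) (z : Eu n) : h z = ‖z‖ := by
  obtain ⟨m, c, hmc⟩ := D.h_form hn
  have hc : 0 < c := by
    set x : Sph n := ⟨EuclideanSpace.single 0 1, by simp⟩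
    have h1 := D.pos x (sph_ne x)
    have h2 := D.pos (-x) (neg_ne_zero.mpr (sph_ne x))
    rw [(hmc _ (sph_ne x)).1] at h1
    rw [(hmc _ (neg_ne_zero.mpr (sph_ne x))).1] at h2
    simp at h1 h2
    linarith
  have key : ∀ x : Sph n, c ^ n * (c + ⟪m, (x : Eu n)⟫_ℝ) = 1 := by
    intro x
    have hx := sph_ne x
    have hx1 : ‖(x : Eu n)‖ = 1 := by simp
    have d1 := D.F_deriv x hx
    have d2 : HasFDerivAt (fun z : Eu n => c • z + ‖z‖ • m)
        (c • ContinuousLinearMap.id ℝ (Eu n) + (‖(x : Eu n)‖⁻¹ • innerSL ℝ (x : Eu n)).smulRight m) x :=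
      ((hasFDerivAt_id _).const_smul c).add ((norm_fderiv _ hx).smul_const m)
    have d3 : Fm X =ᶠ[𝓝 (x : Eu n)] fun z : Eu n => c • z + ‖z‖ • m := by
      filter_upwards [isOpen_compl_singleton.mem_nhds hx] with z hz
      exact (hmc z hz).2
    have e := (d2.congr_of_eventuallyEq d3).unique d1
    have hdet := D.F_det_sph x
    rw [← e, ContinuousLinearMap.det] at hdet
    have e2 : ((c • ContinuousLinearMap.id ℝ (Eu n) + (‖(x : Eu n)‖⁻¹ • innerSL ℝ (x : Eu n)).smulRight m :
        Eu n →L[ℝ] Eu n) : Eu n →ₗ[ℝ] Eu n) =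
        c • LinearMap.transvection ((innerSL ℝ (x : Eu n) : Eu n →L[ℝ] ℝ) : Eu n →ₗ[ℝ] ℝ) (c⁻¹ • m) := by
      ext1 v
      simp [LinearMap.transvection.apply, smul_smul]
      congr 1
      field_simp
    rw [e2, LinearMap.det_smul, LinearMap.transvection.det] at hdet
    simp only [finrank_euclideanSpace, Fintype.card_fin] at hdet
    have e5 : ((innerSL ℝ (x : Eu n) : Eu n →L[ℝ] ℝ) : Eu n →ₗ[ℝ] ℝ) (c⁻¹ • m) = c⁻¹ * ⟪m, (x : Eu n)⟫_ℝ := by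
      simp [real_inner_comm]
    rw [e5] at hdet
    have e6 : c^(n+1) * (1 + c⁻¹ * ⟪m,(x:Eu n)⟫_ℝ) = c^n * (c + ⟪m,(x:Eu n)⟫_ℝ) := by
      rw [pow_succ]; field_simp
    rw [← e6]; exact hdet
  have hm0 : ∀ x : Sph n, ⟪m, (x : Eu n)⟫_ℝ = 0 := by
    intro x
    have k1 := key x
    have k2 := key ⟨-x, by simp⟩
    simp only [inner_neg_right] at k2
    have : c ^ n * ⟪m, (x : Eu n)⟫_ℝ = 0 := by linarith
    exact (mul_eq_zero.mp this).resolve_left (by positivity)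
  have hc1 : c = 1 := by
    have k1 := key ⟨EuclideanSpace.single 0 1, by simp⟩
    rw [hm0, add_zero, ← pow_succ] at k1
    exact (pow_eq_one_iff_of_nonneg hc.le (by omega)).mp k1
  by_cases hz : z = 0
  · rw [hz, D.h_zero, norm_zero]
  have hz' : 0 < ‖z‖ := norm_pos_iff.mpr hz
  have h0 := hm0 ⟨‖z‖⁻¹ • z, by simp [norm_smul, hz'.ne']⟩
  simp only [real_inner_smul_right] at h0
  have h1 : ⟪m, z⟫_ℝ = 0 := (mul_eq_zero.mp h0).resolve_left (by positivity)
  rw [(hmc z hz).1, h1, hc1]; ring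

end Dat

theorem unit_ball_of_gauss_curvature_eq_support (n : ℕ) (hn : 1 ≤ n)
    (K : Set (Eu n)) (hK : IsSmoothConvexBody K)
    (heq : ∀ x : Sph n, sfn K (x : Eu n) * rK K (x : Eu n) = 1) :
    K = Metric.closedBall (0 : Eu n) 1 ∧ ∀ z : Eu n, sfn K z = ‖z‖ := by
  have D := mk_dat hK heq
  have hh := D.h_eq hn
  refine ⟨?_, hh⟩
  ext y
  rw [mem_closedBall_zero_iff]
  constructor
  · intro hy
    obtain ⟨_, _, _, hm⟩ := sfn_isLUB hK y
    have := hm y hy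
    rw [hh, real_inner_self_eq_norm_sq] at this
    by_contra hlt
    push Not at hlt
    nlinarith
  · intro hy
    by_contra hyK
    obtain ⟨f, u, hf, hu⟩ := geometric_hahn_banach_closed_point hK.convex hK.compact.isClosed hyK
    set p := (InnerProductSpace.toDual ℝ (Eu n)).symm f with hp
    have hfp : ∀ w, f w = ⟪p, w⟫_ℝ := fun w => by simp [hp]
    obtain ⟨a, ha, hae, _⟩ := sfn_isLUB hK p
    have h1 := hf a ha
    rw [hfp, hae, hh] at h1
    rw [hfp] at hu
    have h2 := real_inner_le_norm p y
    nlinarith [norm_nonneg p]
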